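/- Suppose α > β > 0. If I_2(α,β) < 1, then Pr_{(σ,ℋ)∼HSBM(n,p,q;k)}(σ̂_trunc(ℋ) ∉ {σ, −σ}) = 1 − o(1) as n → ∞. On the other hand, if I_2(α,β) > 1, then Pr_{(σ,ℋ)∼HSBM(n,p,q;k)}(σ̂_trunc(ℋ) ∈ {σ, −σ}) = 1 − o(1). -/

import Mathlib

open Finset Filter Matrix

open scoped Classical

/-- The `k`-element subsets of `[n]`, i.e. the potential hyperedges. -/
abbrev KSet (n k : ℕ) := {e : Finset (Fin n) // e.card = k}

/-- A `±1` label vector (encoded by `Bool`) is balanced if it has equally many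
`+1`'s (`true`) and `-1`'s (`false`). -/
abbrev balanced {n : ℕ} (σ : Fin n → Bool) : Prop :=
  2 * (Finset.univ.filter (fun i => σ i = true)).card = n

/-- `e` is in-cluster w.r.t. `σ`: `σ` is constant on `e`. -/
abbrev inCluster {n : ℕ} (σ : Fin n → Bool) (e : Finset (Fin n)) : Prop :=
  ∀ i ∈ e, ∀ j ∈ e, σ i = σ j

/-- Probability that `e` appears as an edge, given the labels `σ`. -/
noncomputable def edgeP {n : ℕ} (p q : ℝ) (σ : Fin n → Bool) (e : Finset (Fin n)) : ℝ :=
  if inCluster σ e then p else q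

/-- Probability of observing exactly the hypergraph with edge-indicator `E`, given labels `σ`
(edges appear independently). -/
noncomputable def hypProb {n k : ℕ} (p q : ℝ) (σ : Fin n → Bool) (E : KSet n k → Bool) : ℝ :=
  ∏ e : KSet n k, if E e then edgeP p q σ e.1 else 1 - edgeP p q σ e.1

/-- Uniform prior on balanced label vectors. -/
noncomputable def sigProb (n : ℕ) (σ : Fin n → Bool) : ℝ :=
  if balanced σ then 1 / ((Finset.univ.filter (fun τ : Fin n → Bool => balanced τ)).card : ℝ)
  else 0

/-- Probability of an event `P` under the joint law `HSBM(n,p,q;k)` of `(σ, ℋ)`. -/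
noncomputable def prEvent (n k : ℕ) (p q : ℝ)
    (P : (Fin n → Bool) → (KSet n k → Bool) → Prop) : ℝ :=
  ∑ σ : Fin n → Bool, ∑ E : KSet n k → Bool,
    sigProb n σ * hypProb p q σ E * (if P σ E then 1 else 0)

/-- Global sign flip. -/
def negB {n : ℕ} (σ : Fin n → Bool) : Fin n → Bool := fun i => !(σ i)

/-- The edge probability parameter `α · log n / C(n-1, k-1)`. -/
noncomputable def pParam (k : ℕ) (α : ℝ) (n : ℕ) : ℝ :=
  α * Real.log n / ((n - 1).choose (k - 1) : ℝ)

/-- The real `±1` vector associated to a Boolean label vector. -/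
def sgn {n : ℕ} (σ : Fin n → Bool) : Fin n → ℝ := fun i => if σ i then 1 else -1

/-- The rank-one matrix `σσᵀ`. -/
noncomputable def outer {n : ℕ} (σ : Fin n → Bool) : Matrix (Fin n) (Fin n) ℝ :=
  Matrix.of fun i j => sgn σ i * sgn σ j

/-- The weighted adjacency matrix `W(H)`: `W i j` is the number of hyperedges containing
both `i` and `j` (zero on the diagonal). -/
noncomputable def Wmat {n k : ℕ} (E : KSet n k → Bool) : Matrix (Fin n) (Fin n) ℝ :=
  Matrix.of fun i j => if i = j then 0 else
    ((Finset.univ.filter (fun e : KSet n k => E e = true ∧ i ∈ e.1 ∧ j ∈ e.1)).card : ℝ)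

/-- Feasibility for the SDP relaxation: `X ⪰ 0`, unit diagonal, `⟨X, 𝟙𝟙ᵀ⟩ = 0`. -/
def sdpFeasible {n : ℕ} (X : Matrix (Fin n) (Fin n) ℝ) : Prop :=
  X.PosSemidef ∧ (∀ i, X i i = 1) ∧ (∑ i, ∑ j, X i j) = 0

/-- The SDP objective `⟨W, X⟩`. -/
noncomputable def sdpObj {n : ℕ} (W X : Matrix (Fin n) (Fin n) ℝ) : ℝ :=
  ∑ i, ∑ j, W i j * X i j

/-- `Xs` is the unique optimal solution of the SDP with input `W`. -/
def sdpUniqueOpt {n : ℕ} (W Xs : Matrix (Fin n) (Fin n) ℝ) : Prop :=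
  sdpFeasible Xs ∧ ∀ X, sdpFeasible X → X ≠ Xs → sdpObj W X < sdpObj W Xs

/-- `Γ = diag(σ) W diag(σ)`. -/
noncomputable def GammaM {n : ℕ} (σ : Fin n → Bool) (W : Matrix (Fin n) (Fin n) ℝ) :
    Matrix (Fin n) (Fin n) ℝ :=
  Matrix.diagonal (sgn σ) * W * Matrix.diagonal (sgn σ)

/-- The Laplacian `L_Γ = diag(Γ𝟙) - Γ`. -/
noncomputable def LGamma {n : ℕ} (σ : Fin n → Bool) (W : Matrix (Fin n) (Fin n) ℝ) :
    Matrix (Fin n) (Fin n) ℝ :=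
  Matrix.diagonal (fun i => ∑ j, GammaM σ W i j) - GammaM σ W

/-- `Π = I - (1/n)𝟙𝟙ᵀ - (1/n)σσᵀ`, the projector onto `span{𝟙, σ}ᗮ`. -/
noncomputable def PiM {n : ℕ} (σ : Fin n → Bool) : Matrix (Fin n) (Fin n) ℝ :=
  1 - (n : ℝ)⁻¹ • Matrix.of (fun _ _ => (1 : ℝ)) - (n : ℝ)⁻¹ • outer σ

/-- The third-smallest eigenvalue of a symmetric matrix, via the Courant–Fischer
max–min characterization over subspaces of dimension `n - 2`. -/
noncomputable def lambda3 {n : ℕ} (M : Matrix (Fin n) (Fin n) ℝ) : ℝ :=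
  sSup {r : ℝ | ∃ V : Submodule ℝ (Fin n → ℝ), Module.finrank ℝ V = n - 2 ∧
    ∀ x ∈ V, r * (∑ i, x i ^ 2) ≤ x ⬝ᵥ M.mulVec x}

/-- The min-bisection objective `∑_{i<j} W_{ij} x_i x_j`. -/
noncomputable def truncObj {n k : ℕ} (E : KSet n k → Bool) (x : Fin n → Bool) : ℝ :=
  ∑ i : Fin n, ∑ j : Fin n, if i < j then Wmat E i j * sgn x i * sgn x j else 0

/-- `est` is a truncated-ML estimator: for every observed hypergraph it returns a balanced
label vector maximizing `∑_{i<j} W_{ij} x_i x_j` over balanced label vectors. -/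
def isTruncMax {n k : ℕ} (est : (KSet n k → Bool) → (Fin n → Bool)) : Prop :=
  ∀ E : KSet n k → Bool, balanced (est E) ∧
    ∀ x : Fin n → Bool, balanced x → truncObj E x ≤ truncObj E (est E)

/-- The quantity `I₂(α,β)` (a maximum over `t ≥ 0`, expressed as a supremum). -/
noncomputable def I2def (k : ℕ) (α β : ℝ) : ℝ :=
  sSup {y : ℝ | ∃ t : ℝ, 0 ≤ t ∧
    y = (1 / 2 ^ (k - 1)) * (α * (1 - Real.exp (-(((k : ℝ) - 1) * t))) +
      β * ∑ a ∈ Finset.Icc 1 (k - 1),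
        ((k - 1).choose a : ℝ) * (1 - Real.exp (-(((k : ℝ) - 1 - 2 * (a : ℝ)) * t))))}

section General
variable {ι : Type*} [Fintype ι]

noncomputable def wt (w : ι → ℝ) (E : ι → Bool) : ℝ := ∏ e, if E e then w e else 1 - w e

noncomputable def Ex (w : ι → ℝ) (f : (ι → Bool) → ℝ) : ℝ := ∑ E, wt w E * f E

lemma wt_nonneg {w : ι → ℝ} (h0 : ∀ e, 0 ≤ w e) (h1 : ∀ e, w e ≤ 1) (E : ι → Bool) :
    0 ≤ wt w E := by
  apply Finset.prod_nonneg
  intro e _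
  split_ifs
  · exact h0 e
  · linarith [h1 e]

lemma Ex_prod (w : ι → ℝ) (g : ι → Bool → ℝ) :
    Ex w (fun E => ∏ e, g e (E e)) = ∏ e, (w e * g e true + (1 - w e) * g e false) := by
  have h := Finset.prod_univ_sum (fun _ : ι => (Finset.univ : Finset Bool))
    (fun e b => (if b then w e else 1 - w e) * g e b)
  simp only [Fintype.sum_bool, Fintype.piFinset_univ] at h
  simp only [if_true] at h
  unfold Ex wt
  simp only [← Finset.prod_mul_distrib]
  rw [← h]
  simp

lemma Ex_one (w : ι → ℝ) : Ex w (fun _ => 1) = 1 := by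
  have := Ex_prod w (fun _ _ => 1)
  simpa using this

lemma sum_wt (w : ι → ℝ) : ∑ E, wt w E = 1 := by
  simpa [Ex] using Ex_one w

lemma Ex_mono {w : ι → ℝ} (h0 : ∀ e, 0 ≤ w e) (h1 : ∀ e, w e ≤ 1) {f g : (ι → Bool) → ℝ}
    (h : ∀ E, f E ≤ g E) : Ex w f ≤ Ex w g :=
  Finset.sum_le_sum fun E _ => mul_le_mul_of_nonneg_left (h E) (wt_nonneg h0 h1 E)

lemma Ex_sum {κ : Type*} (w : ι → ℝ) (s : Finset κ) (f : κ → (ι → Bool) → ℝ) :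
    Ex w (fun E => ∑ i ∈ s, f i E) = ∑ i ∈ s, Ex w (f i) := by
  unfold Ex
  simp only [Finset.mul_sum]
  rw [Finset.sum_comm]

lemma Ex_add (w : ι → ℝ) (f g : (ι → Bool) → ℝ) :
    Ex w (fun E => f E + g E) = Ex w f + Ex w g := by
  unfold Ex
  simp only [mul_add, Finset.sum_add_distrib]

lemma Ex_sub (w : ι → ℝ) (f g : (ι → Bool) → ℝ) :
    Ex w (fun E => f E - g E) = Ex w f - Ex w g := by
  unfold Ex
  simp only [mul_sub, Finset.sum_sub_distrib]

lemma Ex_const_mul (w : ι → ℝ) (c : ℝ) (f : (ι → Bool) → ℝ) :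
    Ex w (fun E => c * f E) = c * Ex w f := by
  unfold Ex
  rw [Finset.mul_sum]
  exact Finset.sum_congr rfl fun E _ => by ring

/-- independence -/
lemma Ex_indep (w : ι → ℝ) (S : ι → Prop) (f g : (ι → Bool) → ℝ)
    (hf : ∀ E E' : ι → Bool, (∀ e, S e → E e = E' e) → f E = f E')
    (hg : ∀ E E' : ι → Bool, (∀ e, ¬ S e → E e = E' e) → g E = g E') :
    Ex w (fun E => f E * g E) = Ex w f * Ex w g := by
  let mix : (ι → Bool) → (ι → Bool) → ι → Bool := fun E E' e => if S e then E e else E' e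
  have hw : ∀ E E', wt w E * wt w E' = wt w (mix E E') * wt w (mix E' E) := by
    intro E E'
    unfold wt
    rw [← Finset.prod_mul_distrib, ← Finset.prod_mul_distrib]
    apply Finset.prod_congr rfl
    intro e _
    by_cases h : S e
    · simp [mix, h]
    · simp [mix, h, mul_comm]
  let φ : ((ι → Bool) × (ι → Bool)) ≃ ((ι → Bool) × (ι → Bool)) :=
    { toFun := fun P => (mix P.1 P.2, mix P.2 P.1)
      invFun := fun P => (mix P.1 P.2, mix P.2 P.1)
      left_inv := by
        rintro ⟨E, E'⟩
        ext e <;> by_cases h : S e <;> simp [mix, h]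
      right_inv := by
        rintro ⟨E, E'⟩
        ext e <;> by_cases h : S e <;> simp [mix, h] }
  have h1 : Ex w f * Ex w g
      = ∑ P : (ι → Bool) × (ι → Bool), wt w P.1 * wt w P.2 * (f P.1 * g P.2) := by
    unfold Ex
    rw [Finset.sum_mul_sum, Fintype.sum_prod_type]
    refine Finset.sum_congr rfl fun E _ => Finset.sum_congr rfl fun E' _ => by ring
  have h2 : Ex w (fun E => f E * g E)
      = ∑ P : (ι → Bool) × (ι → Bool), wt w P.1 * wt w P.2 * (f P.1 * g P.1) := by
    rw [Fintype.sum_prod_type]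
    unfold Ex
    refine Finset.sum_congr rfl fun E _ => ?_
    have : ∀ E', wt w E * wt w E' * (f E * g E) = wt w E' * (wt w E * (f E * g E)) := by
      intro E'; ring
    simp only [this]
    rw [← Finset.sum_mul, sum_wt, one_mul]
  rw [h1, h2, ← Equiv.sum_comp φ]
  refine Finset.sum_congr rfl ?_
  rintro ⟨E, E'⟩ _
  simp only [φ, Equiv.coe_fn_mk]
  rw [← hw]
  have e1 : f (mix E E') = f E := hf _ _ fun e he => by simp [mix, he]
  have e2 : g (mix E E') = g E' := hg _ _ fun e he => by simp [mix, he]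
  rw [e1, e2]

lemma Ex_indep_prod {κ : Type*} (w : ι → ℝ) (s : Finset κ) (S : κ → ι → Prop)
    (f : κ → (ι → Bool) → ℝ)
    (hdis : ∀ i ∈ s, ∀ j ∈ s, ∀ e, S i e → S j e → i = j)
    (hf : ∀ i ∈ s, ∀ E E' : ι → Bool, (∀ e, S i e → E e = E' e) → f i E = f i E') :
    Ex w (fun E => ∏ i ∈ s, f i E) = ∏ i ∈ s, Ex w (f i) := by
  induction s using Finset.induction_on with
  | empty => simpa using Ex_one w
  | insert a s ha ih =>
    simp only [Finset.prod_insert ha]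
    rw [Ex_indep w (S a), ih]
    · intro i hi j hj; exact hdis i (mem_insert_of_mem hi) j (mem_insert_of_mem hj)
    · intro i hi; exact hf i (mem_insert_of_mem hi)
    · exact hf a (mem_insert_self _ _)
    · intro E E' h
      refine Finset.prod_congr rfl fun i hi => hf i (mem_insert_of_mem hi) _ _ fun e he => h e ?_
      intro hae
      have := hdis a (mem_insert_self _ _) i (mem_insert_of_mem hi) e hae he
      exact ha (this ▸ hi)

noncomputable def lin (c : ι → ℝ) (E : ι → Bool) : ℝ := ∑ e, if E e then c e else 0

lemma Ex_exp (w c : ι → ℝ) (t : ℝ) :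
    Ex w (fun E => Real.exp (-(t * lin c E))) = ∏ e, (1 - w e * (1 - Real.exp (-(t * c e)))) := by
  have h := Ex_prod w (fun e b => Real.exp (-(t * (if b then c e else 0))))
  have : (fun E : ι → Bool => Real.exp (-(t * lin c E)))
      = fun E => ∏ e, Real.exp (-(t * (if E e then c e else 0))) := by
    funext E
    rw [← Real.exp_sum, lin, Finset.mul_sum, Finset.sum_neg_distrib]
  rw [this, h]
  refine Finset.prod_congr rfl fun e _ => by simp; ring

lemma Ex_exp_le {w : ι → ℝ} (h0 : ∀ e, 0 ≤ w e) (h1 : ∀ e, w e ≤ 1) (c : ι → ℝ) (t : ℝ) :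
    Ex w (fun E => Real.exp (-(t * lin c E)))
      ≤ Real.exp (-∑ e, w e * (1 - Real.exp (-(t * c e)))) := by
  rw [Ex_exp, ← Finset.sum_neg_distrib, Real.exp_sum]
  refine Finset.prod_le_prod (fun e _ => ?_) (fun e _ => ?_)
  · have := Real.exp_pos (-(t * c e))
    nlinarith [h0 e, h1 e, mul_nonneg (h0 e) this.le]
  · have := Real.add_one_le_exp (-(w e * (1 - Real.exp (-(t * c e)))))
    linarith

lemma exp_le_one_sub {x : ℝ} (hx : |x| ≤ 1/2) : Real.exp (-x - 2 * x^2) ≤ 1 - x := by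
  have hx2 := abs_le.1 hx
  have h1 : 0 < 1 - x := by linarith
  have h2 : (1 - x)⁻¹ ≤ Real.exp (x + 2 * x^2) := by
    have h3 := Real.add_one_le_exp (x / (1 - x))
    have h4 : x / (1 - x) ≤ x + 2 * x^2 := by
      rw [div_le_iff₀ h1]
      nlinarith [mul_nonneg (sq_nonneg x) (by linarith : 0 ≤ 1 - 2 * x)]
    have h5 : (1 - x)⁻¹ = x / (1 - x) + 1 := by field_simp; ring
    rw [h5]
    exact h3.trans (Real.exp_le_exp.2 h4)
  have h6 : Real.exp (-x - 2 * x^2) = (Real.exp (x + 2 * x^2))⁻¹ := by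
    rw [← Real.exp_neg]; ring_nf
  rw [h6]
  exact inv_le_of_inv_le₀ h1 h2

lemma le_Ex_exp {w : ι → ℝ} (c : ι → ℝ) (t : ℝ)
    (h : ∀ e, |w e * (1 - Real.exp (-(t * c e)))| ≤ 1/2) :
    Real.exp (-(∑ e, w e * (1 - Real.exp (-(t * c e))))
      - ∑ e, 2 * (w e * (1 - Real.exp (-(t * c e))))^2)
    ≤ Ex w (fun E => Real.exp (-(t * lin c E))) := by
  rw [Ex_exp, ← Finset.sum_neg_distrib, ← Finset.sum_sub_distrib, Real.exp_sum]
  refine Finset.prod_le_prod (fun e _ => (Real.exp_pos _).le) (fun e _ => exp_le_one_sub (h e))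

lemma chernoff {w : ι → ℝ} (h0 : ∀ e, 0 ≤ w e) (h1 : ∀ e, w e ≤ 1) (c : ι → ℝ) {t : ℝ}
    (ht : 0 ≤ t) :
    Ex w (fun E => if lin c E ≤ 0 then 1 else 0)
      ≤ Real.exp (-∑ e, w e * (1 - Real.exp (-(t * c e)))) := by
  refine le_trans (Ex_mono h0 h1 fun E => ?_) (Ex_exp_le h0 h1 c t)
  split_ifs with h
  · rw [Real.one_le_exp_iff]; nlinarith
  · exact (Real.exp_pos _).le

lemma tail_lower {w : ι → ℝ} (h0 : ∀ e, 0 ≤ w e) (h1 : ∀ e, w e ≤ 1) (c : ι → ℝ) {t s η : ℝ}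
    (ht : 0 ≤ t) (hs : 0 ≤ s) :
    Real.exp (-(t * η)) * (Ex w (fun E => Real.exp (-(t * lin c E)))
      - Ex w (fun E => Real.exp (-((t - s) * lin c E)))
      - Real.exp (-(s * η)) * Ex w (fun E => Real.exp (-((t + s) * lin c E))))
    ≤ Ex w (fun E => if lin c E < 0 then 1 else 0) := by
  rw [← Ex_const_mul, ← Ex_sub, ← Ex_sub, ← Ex_const_mul]
  refine Ex_mono h0 h1 fun E => ?_
  set X := lin c E
  have e1 : Real.exp (-((t - s) * X)) = Real.exp (-(t * X)) * Real.exp (s * X) := by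
    rw [← Real.exp_add]; ring_nf
  have e2 : Real.exp (-(s * η)) * Real.exp (-((t + s) * X))
      = Real.exp (-(t * X)) * Real.exp (-(s * (X + η))) := by
    rw [← Real.exp_add, ← Real.exp_add]; ring_nf
  rw [e1, e2]
  have p1 := Real.exp_pos (-(t * X))
  have p2 := Real.exp_pos (s * X)
  have p3 := Real.exp_pos (-(s * (X + η)))
  have p4 := Real.exp_pos (-(t * η))
  have key : Real.exp (-(t * X)) - Real.exp (-(t * X)) * Real.exp (s * X) -
      Real.exp (-(t * X)) * Real.exp (-(s * (X + η)))
      = Real.exp (-(t * X)) * (1 - Real.exp (s * X) - Real.exp (-(s * (X + η)))) := by ring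
  rw [key]
  split_ifs with h
  · by_cases h2 : X + η < 0
    · have : 1 ≤ Real.exp (-(s * (X + η))) := by rw [Real.one_le_exp_iff]; nlinarith
      have h3 : Real.exp (-(t * X)) * (1 - Real.exp (s * X) - Real.exp (-(s * (X + η)))) ≤ 0 :=
        mul_nonpos_of_nonneg_of_nonpos p1.le (by linarith)
      have := mul_nonpos_of_nonneg_of_nonpos p4.le h3
      linarith
    · push Not at h2
      calc _ ≤ Real.exp (-(t * η)) * (Real.exp (-(t * X)) * 1) := by
            gcongr; linarith
        _ = Real.exp (-(t * (X + η))) := by rw [mul_one, ← Real.exp_add]; ring_nf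
        _ ≤ 1 := by rw [Real.exp_le_one_iff]; nlinarith
  · push Not at h
    have : 1 ≤ Real.exp (s * X) := by rw [Real.one_le_exp_iff]; nlinarith
    have h3 : Real.exp (-(t * X)) * (1 - Real.exp (s * X) - Real.exp (-(s * (X + η)))) ≤ 0 :=
      mul_nonpos_of_nonneg_of_nonpos p1.le (by linarith)
    exact mul_nonpos_of_nonneg_of_nonpos p4.le h3

end General


lemma sum_lt_pairs {n : ℕ} (f : Fin n → ℝ) :
    (∑ i, ∑ j, if i < j then f i * f j else 0) = ((∑ i, f i)^2 - ∑ i, (f i)^2) / 2 := by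
  have h1 : (∑ i, f i)^2 = ∑ i, ∑ j, f i * f j := by rw [sq, Finset.sum_mul_sum]
  have h2 : ∀ i j, f i * f j = (if i < j then f i * f j else 0) + (if j < i then f j * f i else 0)
      + (if i = j then (f i)^2 else 0) := by
    intro i j
    rcases lt_trichotomy i j with h | h | h
    · simp [h, h.not_gt, h.ne]
    · subst h; simp; ring
    · simp [h, h.not_gt, h.ne', mul_comm]
  have h3 : ∑ i, ∑ j, f i * f j = (∑ i, ∑ j, if i < j then f i * f j else 0)
      + (∑ i, ∑ j, if j < i then f j * f i else 0) + ∑ i, (f i)^2 := by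
    rw [Finset.sum_congr rfl fun i _ => Finset.sum_congr rfl fun j _ => h2 i j]
    simp [Finset.sum_add_distrib]
  rw [Finset.sum_comm (f := fun i j => if j < i then f j * f i else 0)] at h3
  rw [h1, h3]; ring

noncomputable def esum {n : ℕ} (x : Fin n → Bool) (e : Finset (Fin n)) : ℝ := ∑ i ∈ e, sgn x i

lemma sgn_sq {n : ℕ} (x : Fin n → Bool) (i : Fin n) : sgn x i ^ 2 = 1 := by
  unfold sgn; split_ifs <;> norm_num

lemma sgn_mul_self {n : ℕ} (x : Fin n → Bool) (i : Fin n) : sgn x i * sgn x i = 1 := by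
  rw [← sq, sgn_sq]

lemma truncObj_eq {n k : ℕ} (E : KSet n k → Bool) (x : Fin n → Bool) :
    truncObj E x = ∑ e : KSet n k, if E e then (esum x e.1 ^ 2 - k) / 2 else 0 := by
  have hW : ∀ i j : Fin n, (if i < j then Wmat E i j * sgn x i * sgn x j else 0)
      = ∑ e : KSet n k, if E e then (if i < j then (if i ∈ e.1 then sgn x i else 0)
        * (if j ∈ e.1 then sgn x j else 0) else 0) else 0 := by
    intro i j
    by_cases h : i < j
    · simp only [h, if_true, Wmat, Matrix.of_apply, h.ne, if_false]
      rw [Finset.card_filter]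
      push_cast
      rw [Finset.sum_mul, Finset.sum_mul]
      refine Finset.sum_congr rfl fun e _ => ?_
      by_cases h1 : E e = true <;> by_cases h2 : i ∈ e.1 <;> by_cases h3 : j ∈ e.1 <;>
        simp [h1, h2, h3]
    · simp [h]
  unfold truncObj
  simp_rw [hW]
  have : ∀ i : Fin n, (∑ j : Fin n, ∑ e : KSet n k, if E e then (if i < j then
      (if i ∈ e.1 then sgn x i else 0) * (if j ∈ e.1 then sgn x j else 0) else 0) else 0)
      = ∑ e : KSet n k, ∑ j : Fin n, if E e then (if i < j then
      (if i ∈ e.1 then sgn x i else 0) * (if j ∈ e.1 then sgn x j else 0) else 0) else 0 :=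
    fun i => Finset.sum_comm
  simp_rw [this]
  rw [Finset.sum_comm]
  refine Finset.sum_congr rfl fun e _ => ?_
  by_cases hE : E e = true
  · simp only [hE, if_true]
    rw [sum_lt_pairs (fun i => if i ∈ e.1 then sgn x i else 0)]
    have h1 : (∑ i, if i ∈ e.1 then sgn x i else 0) = esum x e.1 := by
      simp [esum]
    have h2 : (∑ i, (if i ∈ e.1 then sgn x i else 0)^2) = (k : ℝ) := by
      simp [sgn_sq, e.2]
    rw [h1, h2]
  · simp [hE]

noncomputable def cE {n : ℕ} (σ x : Fin n → Bool) (e : Finset (Fin n)) : ℝ :=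
  (esum σ e ^ 2 - esum x e ^ 2) / 4

lemma obj_diff {n k : ℕ} (E : KSet n k → Bool) (σ x : Fin n → Bool) :
    truncObj E σ - truncObj E x = 2 * lin (fun e : KSet n k => cE σ x e.1) E := by
  rw [truncObj_eq, truncObj_eq, lin, ← Finset.sum_sub_distrib, Finset.mul_sum]
  refine Finset.sum_congr rfl fun e _ => ?_
  split_ifs
  · unfold cE; ring
  · ring

lemma sgn_negB {n : ℕ} (x : Fin n → Bool) (i : Fin n) : sgn (negB x) i = - sgn x i := by
  unfold sgn negB; cases x i <;> simp

lemma obj_negB {n k : ℕ} (E : KSet n k → Bool) (x : Fin n → Bool) :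
    truncObj E (negB x) = truncObj E x := by
  rw [truncObj_eq, truncObj_eq]
  simp [esum, sgn_negB]

lemma esum_abs_le {n : ℕ} (x : Fin n → Bool) (e : Finset (Fin n)) : |esum x e| ≤ e.card := by
  refine (Finset.abs_sum_le_sum_abs _ _).trans ?_
  have : ∀ i ∈ e, |sgn x i| = 1 := by
    intro i _; unfold sgn; split_ifs <;> simp
  rw [Finset.sum_congr rfl this]; simp

lemma cE_abs_le {n : ℕ} (σ x : Fin n → Bool) (e : Finset (Fin n)) :
    |cE σ x e| ≤ (e.card : ℝ)^2 := by
  have h1 := esum_abs_le σ e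
  have h2 := esum_abs_le x e
  have h3 : esum σ e ^ 2 ≤ (e.card : ℝ)^2 := by rw [← sq_abs]; gcongr
  have h4 : esum x e ^ 2 ≤ (e.card : ℝ)^2 := by rw [← sq_abs (esum x e)]; gcongr
  unfold cE
  rw [abs_le]; constructor <;> nlinarith [sq_nonneg (esum σ e), sq_nonneg (esum x e)]

/-- the number of elements of `e` on the other side of `v` -/
noncomputable def oth {n : ℕ} (σ : Fin n → Bool) (v : Fin n) (e : Finset (Fin n)) : ℕ :=
  (e.filter (fun j => σ j ≠ σ v)).card

lemma sgn_mul {n : ℕ} (σ : Fin n → Bool) (v j : Fin n) :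
    sgn σ v * sgn σ j = 1 - 2 * (if σ j ≠ σ v then 1 else 0) := by
  unfold sgn; cases σ v <;> cases σ j <;> norm_num

lemma sgn_esum {n : ℕ} (σ : Fin n → Bool) (v : Fin n) (e : Finset (Fin n)) :
    sgn σ v * esum σ e = e.card - 2 * oth σ v e := by
  unfold esum oth
  rw [Finset.mul_sum, Finset.sum_congr rfl (fun j _ => sgn_mul σ v j), Finset.sum_sub_distrib,
    ← Finset.mul_sum, Finset.card_filter]
  simp

lemma cE_zero {n : ℕ} (σ x : Fin n → Bool) (e : Finset (Fin n)) (h : ∀ j ∈ e, σ j = x j) :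
    cE σ x e = 0 := by
  have : esum σ e = esum x e := Finset.sum_congr rfl fun j hj => by simp [sgn, h j hj]
  simp [cE, this]

lemma cE_single {n k : ℕ} (σ x : Fin n → Bool) (e : Finset (Fin n)) (hk : e.card = k) (v : Fin n)
    (hv : v ∈ e) (hvx : σ v ≠ x v) (h : ∀ j ∈ e, j ≠ v → σ j = x j) :
    cE σ x e = (k : ℝ) - 1 - 2 * oth σ v e := by
  have h1 : esum x e = esum σ e - 2 * sgn σ v := by
    have ha : esum x e = sgn x v + ∑ j ∈ e.erase v, sgn x j := (Finset.add_sum_erase _ _ hv).symm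
    have hb : esum σ e = sgn σ v + ∑ j ∈ e.erase v, sgn σ j := (Finset.add_sum_erase _ _ hv).symm
    have hc : ∑ j ∈ e.erase v, sgn x j = ∑ j ∈ e.erase v, sgn σ j :=
      Finset.sum_congr rfl fun j hj => by
        simp [sgn, h j (mem_of_mem_erase hj) (ne_of_mem_erase hj)]
    have hd : sgn x v = - sgn σ v := by
      unfold sgn; cases h1 : σ v <;> cases h2 : x v <;> simp_all
    rw [ha, hb, hc, hd]; ring
  have h2 := sgn_esum σ v e
  have h3 := sgn_sq σ v
  rw [hk] at h2
  unfold cE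
  rw [h1]
  linear_combination h2 - h3

lemma inCluster_iff {n : ℕ} (σ : Fin n → Bool) (v : Fin n) (e : Finset (Fin n)) (hv : v ∈ e) :
    inCluster σ e ↔ oth σ v e = 0 := by
  unfold oth
  rw [Finset.card_eq_zero, Finset.filter_eq_empty_iff]
  constructor
  · intro h j hj; simpa using h j hj v hv
  · intro h i hi j hj
    have h1 := h hi; have h2 := h hj
    push Not at h1 h2
    rw [h1, h2]

/-- counting sets of size k between B and V -/
lemma card_between {n k : ℕ} (B V : Finset (Fin n)) (hBV : B ⊆ V) (hk : B.card ≤ k) :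
    (univ.filter (fun e : KSet n k => B ⊆ e.1 ∧ e.1 ⊆ V)).card
      = (V.card - B.card).choose (k - B.card) := by
  rw [← Finset.card_sdiff_of_subset hBV, ← Finset.card_powersetCard]
  refine Finset.card_bij' (fun e _ => e.1 \ B)
    (fun s hs => ⟨s ∪ B, by
      rw [mem_powersetCard] at hs
      rw [Finset.card_union_of_disjoint, hs.2]; · omega
      · exact (Finset.sdiff_disjoint).mono_left hs.1⟩) ?_ ?_ ?_ ?_
  · intro e he
    rw [mem_filter] at he
    rw [mem_powersetCard]
    refine ⟨sdiff_subset_sdiff he.2.2 le_rfl, ?_⟩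
    rw [Finset.card_sdiff_of_subset he.2.1, e.2]
  · intro s hs
    rw [mem_powersetCard] at hs
    simp only [mem_filter, mem_univ, true_and]
    exact ⟨subset_union_right, union_subset (hs.1.trans sdiff_subset) hBV⟩
  · intro e he
    rw [mem_filter] at he
    apply Subtype.ext
    exact sdiff_union_of_subset he.2.1
  · intro s hs
    rw [mem_powersetCard] at hs
    show (s ∪ B) \ B = s
    rw [union_sdiff_right]
    exact sdiff_eq_self_of_disjoint ((Finset.sdiff_disjoint).mono_left hs.1)

lemma card_pair {n k : ℕ} (hk : 2 ≤ k) (i j : Fin n) (hij : i ≠ j) :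
    (univ.filter (fun e : KSet n k => i ∈ e.1 ∧ j ∈ e.1)).card = (n - 2).choose (k - 2) := by
  have h := card_between (k := k) ({i, j} : Finset (Fin n)) univ (subset_univ _)
    (by rw [Finset.card_pair hij]; exact hk)
  rw [Finset.card_pair hij] at h
  simpa [insert_subset_iff] using h

lemma bal_card {m : ℕ} {σ : Fin (2 * m) → Bool} (hσ : balanced σ) (b : Bool) :
    (univ.filter (fun i => σ i = b)).card = m := by
  have h1 : (univ.filter (fun i => σ i = true)).card = m := by unfold balanced at hσ; omega
  have h2 : (univ.filter (fun i => σ i = true)).card + (univ.filter (fun i => ¬ σ i = true)).card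
    = 2 * m := by
    rw [Finset.card_filter_add_card_filter_not]; simp
  cases b
  · have : (univ.filter (fun i => σ i = false)) = (univ.filter (fun i => ¬ σ i = true)) := by
      ext; simp
    rw [this]; omega
  · exact h1

lemma card_fiber {m k : ℕ} {σ : Fin (2 * m) → Bool} (hσ : balanced σ) (v : Fin (2 * m)) (a : ℕ)
    (ha : a + 1 ≤ k) :
    (univ.filter (fun e : KSet (2 * m) k => v ∈ e.1 ∧ oth σ v e.1 = a)).card
      = (m - 1).choose (k - 1 - a) * m.choose a := by
  set V := (univ.filter (fun i => σ i = σ v)).erase v with hV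
  set U := univ.filter (fun i => σ i ≠ σ v) with hU
  have cV : V.card = m - 1 := by
    rw [hV, Finset.card_erase_of_mem (by simp), bal_card hσ]
  have cU : U.card = m := by
    have : U = univ.filter (fun i => σ i = !(σ v)) := by
      ext i; simp only [hU, mem_filter, mem_univ, true_and]; cases σ i <;> cases σ v <;> simp
    rw [this, bal_card hσ]
  have hdis : Disjoint V U := by
    rw [Finset.disjoint_left]; intro i hi hi'
    simp [hV, hU] at hi hi'; exact hi' hi.2
  have e1 : (m - 1).choose (k - 1 - a) * m.choose a
      = (powersetCard (k - 1 - a) V ×ˢ powersetCard a U).card := by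
    rw [Finset.card_product, Finset.card_powersetCard, Finset.card_powersetCard, cV, cU]
  rw [e1]
  have hvV : v ∉ V := by simp [hV]
  have hvU : v ∉ U := by simp [hU]
  refine Finset.card_bij' (fun e _ => (e.1.filter (fun j => σ j = σ v) |>.erase v,
      e.1.filter (fun j => σ j ≠ σ v)))
    (fun s hs => ⟨insert v (s.1 ∪ s.2), by
      rw [mem_product, mem_powersetCard, mem_powersetCard] at hs
      have hv1 : v ∉ s.1 ∪ s.2 := by
        rw [mem_union]; rintro (h | h)
        · exact hvV (hs.1.1 h)
        · exact hvU (hs.2.1 h)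
      rw [Finset.card_insert_of_notMem hv1, Finset.card_union_of_disjoint, hs.1.2, hs.2.2]
      · omega
      · exact hdis.mono hs.1.1 hs.2.1⟩) ?_ ?_ ?_ ?_
  · intro e he
    simp only [mem_filter, mem_univ, true_and] at he
    rw [mem_product, mem_powersetCard, mem_powersetCard]
    have hc : (e.1.filter (fun j => σ j = σ v)).card + oth σ v e.1 = k := by
      unfold oth
      rw [Finset.card_filter_add_card_filter_not, e.2]
    refine ⟨⟨?_, ?_⟩, ?_, ?_⟩
    · intro j hj; simp [hV] at hj ⊢; tauto
    · simp only
      rw [Finset.card_erase_of_mem (by simp [he.1])]; omega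
    · intro j hj; simp [hU] at hj ⊢; tauto
    · exact he.2
  · intro s hs
    rw [mem_product, mem_powersetCard, mem_powersetCard] at hs
    simp only [mem_filter, mem_univ, true_and]
    refine ⟨mem_insert_self _ _, ?_⟩
    have : (insert v (s.1 ∪ s.2)).filter (fun j => σ j ≠ σ v) = s.2 := by
      ext j
      simp only [mem_filter, mem_insert, mem_union]
      constructor
      · rintro ⟨h1 | h1 | h1, h2⟩
        · subst h1; simp at h2
        · have := hs.1.1 h1; simp [hV] at this; exact absurd this.2 h2
        · exact h1
      · intro h; refine ⟨Or.inr (Or.inr h), ?_⟩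
        have := hs.2.1 h; simpa [hU] using this
    unfold oth
    rw [this, hs.2.2]
  · intro e he
    simp only [mem_filter, mem_univ, true_and] at he
    apply Subtype.ext
    ext j
    simp only [mem_insert, mem_union, mem_erase, mem_filter]
    by_cases hj : j = v
    · subst hj; simp [he.1]
    · by_cases hs : σ j = σ v <;> simp [hj, hs]
  · intro s hs
    rw [mem_product, mem_powersetCard, mem_powersetCard] at hs
    ext j
    · simp only [mem_erase, mem_filter, mem_insert, mem_union]
      constructor
      · rintro ⟨h1, (h2 | h2 | h2), h3⟩
        · exact absurd h2 h1
        · exact h2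
        · have := hs.2.1 h2; simp [hU] at this; exact absurd h3 this
      · intro h
        have := hs.1.1 h; simp [hV] at this
        exact ⟨this.1, Or.inr (Or.inl h), this.2⟩
    · simp only [mem_filter, mem_insert, mem_union]
      constructor
      · rintro ⟨(h2 | h2 | h2), h3⟩
        · subst h2; simp at h3
        · have := hs.1.1 h2; simp [hV] at this; exact absurd this.2 h3
        · exact h2
      · intro h
        have := hs.2.1 h; simp [hU] at this
        exact ⟨Or.inr (Or.inr h), this⟩

lemma oth_lt {n k : ℕ} (σ : Fin n → Bool) (v : Fin n) (e : KSet n k) (hv : v ∈ e.1) :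
    oth σ v e.1 < k := by
  have : oth σ v e.1 < e.1.card := by
    unfold oth
    apply Finset.card_lt_card
    rw [Finset.ssubset_iff_of_subset (filter_subset _ _)]
    exact ⟨v, hv, by simp⟩
  rwa [e.2] at this

lemma sum_oth {m k : ℕ} {σ : Fin (2 * m) → Bool} (hσ : balanced σ)
    (v : Fin (2 * m)) (g : ℕ → ℝ) :
    (∑ e : KSet (2 * m) k, if v ∈ e.1 then g (oth σ v e.1) else 0)
      = ∑ a ∈ range k, ((m - 1).choose (k - 1 - a) * m.choose a : ℕ) * g a := by
  rw [← Finset.sum_filter]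
  rw [← Finset.sum_fiberwise_of_maps_to (t := range k) (g := fun e : KSet (2*m) k => oth σ v e.1)]
  · refine Finset.sum_congr rfl fun a ha => ?_
    rw [mem_range] at ha
    rw [Finset.filter_filter, ← card_fiber hσ v a (by omega), ← nsmul_eq_mul]
    rw [← Finset.sum_const]
    refine Finset.sum_congr rfl fun e he => ?_
    simp only [mem_filter] at he
    rw [he.2.2]
  · intro e he
    simp only [mem_filter] at he
    exact mem_range.2 (oth_lt σ v e he.2)



lemma card_hit {n k : ℕ} (hk : 2 ≤ k) (v : Fin n) (A : Finset (Fin n)) :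
    (univ.filter (fun e : KSet n k => v ∈ e.1 ∧ ∃ j ∈ A, j ≠ v ∧ j ∈ e.1)).card
      ≤ A.card * (n - 2).choose (k - 2) := by
  have h1 : (univ.filter (fun e : KSet n k => v ∈ e.1 ∧ ∃ j ∈ A, j ≠ v ∧ j ∈ e.1))
      ⊆ (A.erase v).biUnion (fun j => univ.filter (fun e : KSet n k => v ∈ e.1 ∧ j ∈ e.1)) := by
    intro e he
    simp only [mem_filter, mem_univ, true_and] at he
    obtain ⟨hv, j, hj, hjv, hje⟩ := he
    simp only [mem_biUnion, mem_filter, mem_univ, true_and, mem_erase]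
    exact ⟨j, ⟨hjv, hj⟩, hv, hje⟩
  refine (card_le_card h1).trans (card_biUnion_le.trans ?_)
  rw [Finset.sum_congr rfl (fun j hj => card_pair hk v j (ne_of_mem_erase hj).symm)]
  rw [sum_const, smul_eq_mul]
  exact Nat.mul_le_mul_right _ (card_le_card (erase_subset _ _))

lemma sum_sgn_bal {m : ℕ} {σ : Fin (2 * m) → Bool} (hσ : balanced σ) : ∑ i, sgn σ i = 0 := by
  have h : ∀ i, sgn σ i = (if σ i = true then 1 else 0) - (if σ i = false then 1 else 0) := by
    intro i; unfold sgn; cases σ i <;> simp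
  simp_rw [h]
  rw [Finset.sum_sub_distrib, Finset.sum_boole, Finset.sum_boole, bal_card hσ, bal_card hσ, sub_self]

lemma sum_sgn_mul {n : ℕ} (σ x : Fin n → Bool) :
    ∑ i, sgn σ i * sgn x i = n - 2 * (univ.filter (fun i => σ i ≠ x i)).card := by
  have h : ∀ i, sgn σ i * sgn x i = 1 - 2 * (if σ i ≠ x i then 1 else 0) := by
    intro i; unfold sgn; cases σ i <;> cases x i <;> norm_num
  simp_rw [h]
  rw [Finset.sum_sub_distrib, ← Finset.mul_sum, Finset.sum_boole]
  simp

lemma cE_pairs {n : ℕ} (σ x : Fin n → Bool) (e : Finset (Fin n)) :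
    cE σ x e = ∑ i, ∑ j, if i ∈ e ∧ j ∈ e then
      (sgn σ i * sgn σ j - sgn x i * sgn x j) / 4 else 0 := by
  have h : ∀ y : Fin n → Bool, esum y e ^ 2
      = ∑ i, ∑ j, if i ∈ e ∧ j ∈ e then sgn y i * sgn y j else 0 := by
    intro y
    have : esum y e = ∑ i, if i ∈ e then sgn y i else 0 := by simp [esum]
    rw [this, sq, Finset.sum_mul_sum]
    refine Finset.sum_congr rfl fun i _ => Finset.sum_congr rfl fun j _ => ?_
    by_cases h1 : i ∈ e <;> by_cases h2 : j ∈ e <;> simp [h1, h2]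
  unfold cE
  rw [h, h, ← Finset.sum_sub_distrib, Finset.sum_div]
  refine Finset.sum_congr rfl fun i _ => ?_
  rw [← Finset.sum_sub_distrib, Finset.sum_div]
  refine Finset.sum_congr rfl fun j _ => ?_
  split_ifs <;> simp

lemma sum_edgeP_pair {m k : ℕ} (hk : 2 ≤ k) (p q : ℝ) {σ : Fin (2 * m) → Bool} (hσ : balanced σ)
    (i j : Fin (2 * m)) (hij : i ≠ j) :
    (∑ e : KSet (2 * m) k, edgeP p q σ e.1 * (if i ∈ e.1 ∧ j ∈ e.1 then 1 else 0))
      = q * (2 * m - 2).choose (k - 2)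
        + (p - q) * (m - 2).choose (k - 2) * (if σ i = σ j then 1 else 0) := by
  have h1 : ∀ e : KSet (2 * m) k, edgeP p q σ e.1 * (if i ∈ e.1 ∧ j ∈ e.1 then 1 else 0)
      = q * (if i ∈ e.1 ∧ j ∈ e.1 then 1 else 0)
        + (p - q) * (if inCluster σ e.1 ∧ i ∈ e.1 ∧ j ∈ e.1 then 1 else 0) := by
    intro e
    unfold edgeP
    by_cases h2 : i ∈ e.1 ∧ j ∈ e.1
    · by_cases h1 : inCluster σ e.1
      · rw [if_pos h1, if_pos h2, if_pos ⟨h1, h2⟩]; ring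
      · rw [if_neg h1, if_pos h2, if_neg (fun h : inCluster σ e.1 ∧ i ∈ e.1 ∧ j ∈ e.1 => h1 h.1)]; ring
    · rw [if_neg h2, if_neg (fun h : inCluster σ e.1 ∧ i ∈ e.1 ∧ j ∈ e.1 => h2 h.2)]; ring
  simp_rw [h1]
  rw [Finset.sum_add_distrib, ← Finset.mul_sum, ← Finset.mul_sum, Finset.sum_boole,
    Finset.sum_boole, card_pair hk i j hij]
  congr 1
  rw [mul_assoc]
  congr 1
  by_cases hs : σ i = σ j
  · simp only [hs, if_true, mul_one]
    congr 1
    have h := card_between (k := k) ({i, j} : Finset (Fin (2 * m)))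
      (univ.filter (fun l => σ l = σ i))
      (by intro l hl; simp at hl ⊢; rcases hl with rfl | rfl; · rfl
          · exact hs.symm) (by rw [Finset.card_pair hij]; exact hk)
    rw [Finset.card_pair hij, bal_card hσ] at h
    rw [← h]
    congr 1
    ext e
    simp only [mem_filter, mem_univ, true_and]
    constructor
    · rintro ⟨h1, h2, h3⟩
      refine ⟨?_, ?_⟩
      · intro l hl; simp at hl; rcases hl with rfl | rfl <;> assumption
      · intro l hl; simp; exact h1 l hl i h2
    · rintro ⟨h1, h2⟩
      refine ⟨?_, h1 (by simp), h1 (by simp)⟩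
      intro a ha b hb
      have h3 := h2 ha; have h4 := h2 hb
      simp at h3 h4; rw [h3, h4]
  · simp only [hs, if_false, mul_zero, Nat.cast_eq_zero, card_eq_zero, filter_eq_empty_iff]
    rintro e _ ⟨h1, h2, h3⟩
    exact hs (h1 i h2 j h3)

lemma mean_D {m k : ℕ} (hk : 2 ≤ k) (p q : ℝ) {σ x : Fin (2 * m) → Bool} (hσ : balanced σ)
    (hx : balanced x) (u : ℕ) (hu : (univ.filter (fun i => σ i ≠ x i)).card = u) :
    ∑ e : KSet (2 * m) k, edgeP p q σ e.1 * cE σ x e.1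
      = (p - q) * (m - 2).choose (k - 2) * ((u : ℝ) * (2 * m - u) / 2) := by
  have h1 : ∀ e : KSet (2 * m) k, edgeP p q σ e.1 * cE σ x e.1 = ∑ i, ∑ j,
      (sgn σ i * sgn σ j - sgn x i * sgn x j) / 4 *
        (edgeP p q σ e.1 * (if i ∈ e.1 ∧ j ∈ e.1 then 1 else 0)) := by
    intro e
    rw [cE_pairs, Finset.mul_sum]
    refine Finset.sum_congr rfl fun i _ => ?_
    rw [Finset.mul_sum]
    refine Finset.sum_congr rfl fun j _ => ?_
    split_ifs <;> ring
  rw [Finset.sum_congr rfl fun e _ => h1 e, Finset.sum_comm]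
  rw [Finset.sum_congr rfl fun i _ => Finset.sum_comm]
  set C := ((2 * m - 2).choose (k - 2) : ℝ)
  set C' := ((m - 2).choose (k - 2) : ℝ)
  have h2 : ∀ i j : Fin (2 * m), (∑ e : KSet (2 * m) k,
      (sgn σ i * sgn σ j - sgn x i * sgn x j) / 4 *
        (edgeP p q σ e.1 * (if i ∈ e.1 ∧ j ∈ e.1 then 1 else 0)))
      = (q * C / 4 + (p - q) * C' / 8) * (sgn σ i * sgn σ j)
        - (q * C / 4 + (p - q) * C' / 8) * (sgn x i * sgn x j)
        + (p - q) * C' / 8 * 1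
        - (p - q) * C' / 8 * ((sgn σ i * sgn x i) * (sgn σ j * sgn x j)) := by
    intro i j
    by_cases hij : i = j
    · subst hij
      rw [sgn_mul_self, sgn_mul_self]
      have : (sgn σ i * sgn x i) * (sgn σ i * sgn x i) = 1 := by
        have a := sgn_mul_self σ i; have b := sgn_mul_self x i
        linear_combination (sgn x i * sgn x i) * a + b
      rw [this]; simp
    · rw [← Finset.mul_sum, sum_edgeP_pair hk p q hσ i j hij]
      have h3 : (if σ i = σ j then (1:ℝ) else 0) = (1 + sgn σ i * sgn σ j) / 2 := by
        unfold sgn; cases σ i <;> cases σ j <;> norm_num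
      rw [h3]
      have a := sgn_sq σ i
      have b := sgn_sq σ j
      have c : (sgn σ i * sgn σ j)^2 = 1 := by rw [mul_pow, a, b, one_mul]
      linear_combination ((p - q) * C' / 8) * c
  rw [Finset.sum_congr rfl fun i _ => Finset.sum_congr rfl fun j _ => h2 i j]
  simp only [Finset.sum_add_distrib, Finset.sum_sub_distrib, ← Finset.mul_sum]
  simp only [← Finset.sum_mul, sum_sgn_bal hσ, sum_sgn_bal hx, sum_sgn_mul, hu]
  simp only [sum_const, card_univ, Fintype.card_fin, nsmul_eq_mul]
  push_cast
  ring


lemma tendsto_choose_div (b : ℕ) (u : ℕ → ℕ) (c : ℝ) (hu : Tendsto u atTop atTop)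
    (huc : Tendsto (fun m : ℕ => (u m : ℝ) / m) atTop (nhds c)) :
    Tendsto (fun m : ℕ => ((u m).choose b : ℝ) / (m : ℝ)^b) atTop (nhds (c^b / b.factorial)) := by
  have h1 : Tendsto (fun n : ℕ => (n.choose b : ℝ) / ((n : ℝ)^b / b.factorial)) atTop (nhds 1) := by
    have := isEquivalent_choose b
    refine (Asymptotics.isEquivalent_iff_tendsto_one ?_).1 this
    filter_upwards [eventually_gt_atTop 0] with n hn
    have : (0:ℝ) < n := by exact_mod_cast hn
    positivity
  have h2 := (h1.comp hu).mul ((huc.pow b).div_const (b.factorial : ℝ))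
  rw [one_mul] at h2
  refine h2.congr' ?_
  filter_upwards [hu.eventually_gt_atTop 0, eventually_gt_atTop 0] with m hm hm0
  have h3 : (0:ℝ) < u m := by exact_mod_cast hm
  have h4 : (0:ℝ) < m := by exact_mod_cast hm0
  have h5 : (0:ℝ) < b.factorial := by positivity
  simp only [Function.comp]
  rw [div_pow]
  field_simp

lemma tendsto_sub_div (l : ℕ) : Tendsto (fun m : ℕ => ((m - l : ℕ) : ℝ) / m) atTop (nhds 1) := by
  have h : Tendsto (fun m : ℕ => 1 - (l : ℝ) / m) atTop (nhds (1 - 0)) :=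
    tendsto_const_nhds.sub (tendsto_const_div_atTop_nhds_zero_nat _)
  rw [sub_zero] at h
  refine h.congr' ?_
  filter_upwards [eventually_gt_atTop l] with m hm
  have h4 : (0:ℝ) < m := by exact_mod_cast (by omega : 0 < m)
  rw [Nat.cast_sub hm.le]; field_simp

lemma tendsto_two_sub_div :
    Tendsto (fun m : ℕ => ((2 * m - 1 : ℕ) : ℝ) / m) atTop (nhds 2) := by
  have h : Tendsto (fun m : ℕ => 2 - (1 : ℝ) / m) atTop (nhds (2 - 0)) :=
    tendsto_const_nhds.sub (tendsto_const_div_atTop_nhds_zero_nat _)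
  rw [sub_zero] at h
  refine h.congr' ?_
  filter_upwards [eventually_gt_atTop 0] with m hm
  have h4 : (0:ℝ) < m := by exact_mod_cast (by omega : 0 < m)
  rw [Nat.cast_sub (by omega)]; push_cast; field_simp

lemma tendsto_sub_atTop (l : ℕ) : Tendsto (fun m : ℕ => m - l) atTop atTop :=
  tendsto_sub_atTop_nat l

lemma tendsto_two_sub_atTop : Tendsto (fun m : ℕ => 2 * m - 1) atTop atTop :=
  tendsto_atTop_mono (fun m => by omega : ∀ m : ℕ, m - 1 ≤ 2 * m - 1) (tendsto_sub_atTop_nat 1)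

lemma tendsto_ratio (k a : ℕ) (ha : a < k) :
    Tendsto (fun m : ℕ => (((m - 1).choose (k - 1 - a) * m.choose a : ℕ) : ℝ)
      / ((2 * m - 1).choose (k - 1) : ℝ)) atTop (nhds (((k - 1).choose a : ℝ) / 2 ^ (k - 1))) := by
  have h1 := tendsto_choose_div (k - 1 - a) (fun m => m - 1) 1 (tendsto_sub_atTop 1) (tendsto_sub_div 1)
  have h2 := tendsto_choose_div a (fun m => m) 1 tendsto_id (by simpa using tendsto_sub_div 0)
  have h3 := tendsto_choose_div (k - 1) (fun m => 2 * m - 1) 2 tendsto_two_sub_atTop tendsto_two_sub_div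
  have h4 := (h1.mul h2).div h3 (by positivity)
  have e : (1 ^ (k - 1 - a) / ((k - 1 - a).factorial : ℝ)) * (1 ^ a / (a.factorial : ℝ))
      / (2 ^ (k - 1) / ((k - 1).factorial : ℝ)) = ((k - 1).choose a : ℝ) / 2 ^ (k - 1) := by
    rw [Nat.cast_choose ℝ (by omega : a ≤ k - 1)]
    field_simp
    simp
  rw [e] at h4
  refine h4.congr' ?_
  filter_upwards [eventually_gt_atTop k] with m hm
  have hm0 : (0:ℝ) < m := by exact_mod_cast (by omega : 0 < m)
  have : (m:ℝ)^(k - 1) = (m:ℝ)^(k - 1 - a) * (m:ℝ)^a := by rw [← pow_add]; congr 1; omega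
  have hC : (0:ℝ) < ((2 * m - 1).choose (k - 1) : ℝ) := by
    exact_mod_cast Nat.choose_pos (by omega)
  simp only [Pi.div_apply]
  push_cast
  rw [this]
  field_simp

lemma tendsto_ratio2 (k : ℕ) (hk : 2 ≤ k) :
    Tendsto (fun m : ℕ => ((m - 2).choose (k - 2) : ℝ) * m
      / ((2 * m - 1).choose (k - 1) : ℝ)) atTop (nhds (((k : ℝ) - 1) / 2 ^ (k - 1))) := by
  have h1 := tendsto_choose_div (k - 2) (fun m => m - 2) 1 (tendsto_sub_atTop 2) (tendsto_sub_div 2)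
  have h3 := tendsto_choose_div (k - 1) (fun m => 2 * m - 1) 2 tendsto_two_sub_atTop tendsto_two_sub_div
  have h4 := h1.div h3 (by positivity)
  obtain ⟨l, rfl⟩ : ∃ l, k = l + 2 := ⟨k - 2, by omega⟩
  have e : (1 ^ (l + 2 - 2) / ((l + 2 - 2).factorial : ℝ))
      / (2 ^ (l + 2 - 1) / ((l + 2 - 1).factorial : ℝ)) = (((l + 2 : ℕ) : ℝ) - 1) / 2 ^ (l + 2 - 1) := by
    have : l + 2 - 1 = l + 1 := by omega
    rw [this, Nat.factorial_succ, Nat.add_sub_cancel]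
    push_cast
    field_simp
    ring
  rw [e] at h4
  refine h4.congr' ?_
  filter_upwards [eventually_gt_atTop (l + 2)] with m hm
  have hm0 : (0:ℝ) < m := by exact_mod_cast (by omega : 0 < m)
  have : (m:ℝ)^(l + 2 - 1) = (m:ℝ)^(l + 2 - 2) * m := by rw [← pow_succ]; congr 1
  have hC : (0:ℝ) < ((2 * m - 1).choose (l + 2 - 1) : ℝ) := by
    exact_mod_cast Nat.choose_pos (by omega)
  simp only [Pi.div_apply]
  rw [this]
  field_simp

noncomputable def gam (α β : ℝ) (a : ℕ) : ℝ := if a = 0 then α else β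

noncomputable def lam (k : ℕ) (α β : ℝ) (a : ℕ) : ℝ :=
  gam α β a * (((k - 1).choose a : ℝ) / 2 ^ (k - 1))

noncomputable def dk (k a : ℕ) : ℝ := (k : ℝ) - 1 - 2 * a

noncomputable def Ifun (k : ℕ) (α β t : ℝ) : ℝ :=
  ∑ a ∈ range k, lam k α β a * (1 - Real.exp (-(t * dk k a)))

noncomputable def Jn (k : ℕ) (α β : ℝ) (m : ℕ) (g : ℕ → ℝ) : ℝ :=
  ∑ a ∈ range k, gam α β a * ((((m - 1).choose (k - 1 - a) * m.choose a : ℕ) : ℝ)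
      / ((2 * m - 1).choose (k - 1) : ℝ)) * g a

lemma tendsto_Jn (k : ℕ) (α β : ℝ) (g : ℕ → ℝ) :
    Tendsto (fun m => Jn k α β m g) atTop (nhds (∑ a ∈ range k, lam k α β a * g a)) := by
  unfold Jn lam
  refine tendsto_finsetSum _ fun a ha => ?_
  exact ((tendsto_ratio k a (mem_range.1 ha)).const_mul _).mul_const _

lemma sum_edgeP_oth {k m : ℕ} (α β : ℝ) {σ : Fin (2 * m) → Bool} (hσ : balanced σ)
    (v : Fin (2 * m)) (g : ℕ → ℝ) :
    (∑ e : KSet (2 * m) k, edgeP (pParam k α (2 * m)) (pParam k β (2 * m)) σ e.1 *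
      (if v ∈ e.1 then g (oth σ v e.1) else 0)) = Real.log (2 * m) * Jn k α β m g := by
  have h := sum_oth (k := k) hσ v (fun a => gam α β a * Real.log (2 * m)
    / ((2 * m - 1).choose (k - 1) : ℝ) * g a)
  have h2 : ∀ e : KSet (2 * m) k, edgeP (pParam k α (2 * m)) (pParam k β (2 * m)) σ e.1 *
      (if v ∈ e.1 then g (oth σ v e.1) else 0) = if v ∈ e.1 then gam α β (oth σ v e.1)
        * Real.log (2 * m) / ((2 * m - 1).choose (k - 1) : ℝ) * g (oth σ v e.1) else 0 := by
    intro e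
    split_ifs with hv
    · congr 1
      unfold edgeP pParam gam
      push_cast
      by_cases hc : inCluster σ e.1
      · rw [if_pos hc, if_pos ((inCluster_iff σ v e.1 hv).1 hc)]
      · rw [if_neg hc, if_neg (fun h => hc ((inCluster_iff σ v e.1 hv).2 h))]
    · simp
  rw [Finset.sum_congr rfl fun e _ => h2 e, h, Jn, Finset.mul_sum]
  refine Finset.sum_congr rfl fun a _ => by ring

lemma I2_set (k : ℕ) (hk : 2 ≤ k) (α β : ℝ) :
    I2def k α β = sSup {y : ℝ | ∃ t : ℝ, 0 ≤ t ∧ y = Ifun k α β t} := by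
  unfold I2def
  congr 1
  ext y
  simp only [Set.mem_ofPred_eq]
  refine exists_congr fun t => and_congr_right fun _ => ?_
  have : (1 / 2 ^ (k - 1)) * (α * (1 - Real.exp (-(((k : ℝ) - 1) * t))) +
      β * ∑ a ∈ Finset.Icc 1 (k - 1),
        ((k - 1).choose a : ℝ) * (1 - Real.exp (-(((k : ℝ) - 1 - 2 * (a : ℝ)) * t))))
      = Ifun k α β t := by
    unfold Ifun lam gam dk
    obtain ⟨l, rfl⟩ : ∃ l, k = l + 1 := ⟨k - 1, by omega⟩
    rw [Finset.sum_range_succ', Nat.add_sub_cancel]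
    rw [Finset.range_eq_Ico, Finset.sum_Ico_add' (fun a => (if a = 0 then α else β) *
      (((l).choose a : ℝ) / 2 ^ l) * (1 - Real.exp (-(t * (((l + 1 : ℕ) : ℝ) - 1 - 2 * (a : ℕ)))))) 0 l 1]
    rw [mul_add, Finset.mul_sum, Finset.mul_sum, add_comm]
    congr 1
    · refine Finset.sum_congr (by ext; simp) fun a ha => ?_
      simp only [mem_Ico] at ha
      rw [if_neg (by omega)]
      rw [mul_comm t]
      ring
    · simp; ring_nf
  rw [this]

lemma Ifun_le (k : ℕ) (hk : 2 ≤ k) {α β : ℝ} (hα : 0 < α) (hβ : 0 < β) {t : ℝ} (ht : 0 ≤ t) :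
    Ifun k α β t ≤ I2def k α β := by
  rw [I2_set k hk]
  apply le_csSup
  · refine ⟨∑ a ∈ range k, lam k α β a, ?_⟩
    rintro y ⟨t, _, rfl⟩
    refine Finset.sum_le_sum fun a _ => ?_
    have h1 : 0 ≤ lam k α β a := by unfold lam gam; split_ifs <;> positivity
    have := Real.exp_pos (-(t * dk k a))
    nlinarith
  · exact ⟨t, ht, rfl⟩

lemma exists_Ifun (k : ℕ) (hk : 2 ≤ k) {α β : ℝ} (h : 1 < I2def k α β) :
    ∃ t, 0 ≤ t ∧ 1 < Ifun k α β t := by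
  rw [I2_set k hk] at h
  obtain ⟨y, ⟨t, ht, rfl⟩, hy⟩ := exists_lt_of_lt_csSup
    (show Set.Nonempty {y : ℝ | ∃ t : ℝ, 0 ≤ t ∧ y = Ifun k α β t} from
      ⟨Ifun k α β 0, 0, le_rfl, rfl⟩) h
  exact ⟨t, ht, hy⟩

noncomputable def dI (k : ℕ) (α β t : ℝ) : ℝ :=
  ∑ a ∈ range k, lam k α β a * (dk k a * Real.exp (-(t * dk k a)))

lemma hasDeriv_Ifun (k : ℕ) (α β t : ℝ) : HasDerivAt (Ifun k α β) (dI k α β t) t := by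
  unfold Ifun dI
  refine HasDerivAt.fun_sum fun a _ => ?_
  refine HasDerivAt.const_mul _ ?_
  have h1 : HasDerivAt (fun t : ℝ => -(t * dk k a)) (-(1 * dk k a)) t :=
    ((hasDerivAt_id t).mul_const _).neg
  have := (h1.exp).const_sub 1
  have e : dk k a * Real.exp (-(t * dk k a)) = -(Real.exp (-(t * dk k a)) * -(1 * dk k a)) := by
    ring
  rw [e]
  exact this

lemma cont_dI (k : ℕ) (α β : ℝ) : Continuous (dI k α β) := by
  unfold dI; fun_prop

lemma lam_nonneg (k : ℕ) {α β : ℝ} (hα : 0 < α) (hβ : 0 < β) (a : ℕ) : 0 ≤ lam k α β a := by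
  unfold lam gam; split_ifs <;> positivity

lemma dI_zero (k : ℕ) (hk : 2 ≤ k) {α β : ℝ} (hβ : 0 < β) (hαβ : β < α) : 0 < dI k α β 0 := by
  have h0 : ∑ a ∈ range k, (((k - 1).choose a : ℝ)) * dk k a = 0 := by
    have hr := Finset.sum_range_reflect (fun a => ((k - 1).choose a : ℝ) * dk k a) k
    have : ∀ j ∈ range k, ((k - 1).choose (k - 1 - j) : ℝ) * dk k (k - 1 - j)
        = - (((k - 1).choose j : ℝ) * dk k j) := by
      intro j hj
      rw [mem_range] at hj
      rw [Nat.choose_symm (by omega)]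
      unfold dk
      rw [Nat.cast_sub (by omega), Nat.cast_sub (by omega)]
      push_cast; ring
    rw [Finset.sum_congr rfl this, Finset.sum_neg_distrib] at hr
    linarith
  have h1 : dI k α β 0 = (α - β) * ((k : ℝ) - 1) / 2 ^ (k - 1)
      + β / 2 ^ (k - 1) * ∑ a ∈ range k, (((k - 1).choose a : ℝ)) * dk k a := by
    unfold dI lam gam
    obtain ⟨l, rfl⟩ : ∃ l, k = l + 1 := ⟨k - 1, by omega⟩
    rw [Finset.sum_range_succ', Finset.sum_range_succ', mul_add, Finset.mul_sum]
    have : ∀ (A B C D : ℝ), A = C → B = D → A + B = C + D := by intros; simp_all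
    rw [← add_assoc, add_comm ((α - β) * _ / _), add_assoc]
    apply this
    · refine Finset.sum_congr rfl fun a _ => ?_
      simp; ring
    · simp [dk]; ring
  rw [h1, h0, mul_zero, add_zero]
  have : (0:ℝ) < (k : ℝ) - 1 := by
    have : (2:ℝ) ≤ k := by exact_mod_cast hk
    linarith
  have : 0 < α - β := by linarith
  positivity

lemma dI_neg (k : ℕ) (hk : 2 ≤ k) {α β : ℝ} (hα : 0 < α) (hβ : 0 < β) :
    ∃ T, 0 < T ∧ dI k α β T ≤ -1 := by
  obtain ⟨l, rfl⟩ : ∃ l, k = l + 1 := ⟨k - 1, by omega⟩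
  have hl1 : (1:ℝ) ≤ l := by exact_mod_cast (by omega : 1 ≤ l)
  set Λ := lam (l + 1) α β l with hΛ
  have hΛ0 : 0 < Λ := by
    rw [hΛ]; unfold lam gam; simp; split_ifs <;> positivity
  set C := ∑ a ∈ range l, lam (l + 1) α β a * |dk (l + 1) a| with hC
  have hC0 : 0 ≤ C := Finset.sum_nonneg fun a _ => mul_nonneg (lam_nonneg _ hα hβ a) (abs_nonneg _)
  refine ⟨(C + 1) / Λ, by positivity, ?_⟩
  set T := (C + 1) / Λ with hT
  have hT0 : 0 < T := by positivity
  have hΛT : Λ * T = C + 1 := by rw [hT]; field_simp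
  unfold dI
  rw [Finset.sum_range_succ]
  have h1 : ∑ a ∈ range l, lam (l + 1) α β a * (dk (l+1) a * Real.exp (-(T * dk (l+1) a))) ≤ C := by
    refine Finset.sum_le_sum fun a _ => mul_le_mul_of_nonneg_left ?_ (lam_nonneg _ hα hβ a)
    by_cases h : 0 ≤ dk (l+1) a
    · rw [abs_of_nonneg h]
      have : Real.exp (-(T * dk (l+1) a)) ≤ 1 := by
        rw [Real.exp_le_one_iff]; have := mul_nonneg hT0.le h; linarith
      nlinarith
    · push Not at h
      have := mul_nonpos_of_nonpos_of_nonneg h.le (Real.exp_pos (-(T * dk (l+1) a))).le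
      exact this.trans (abs_nonneg _)
  have h2 : dk (l + 1) l = - (l : ℝ) := by unfold dk; push_cast; ring
  rw [h2, ← hΛ]
  have h3 : T ≤ Real.exp (-(T * -(l:ℝ))) := by
    have := Real.add_one_le_exp (-(T * -(l:ℝ)))
    nlinarith
  have h4 : Λ * T ≤ Λ * (l * Real.exp (-(T * -(l:ℝ)))) := by
    apply mul_le_mul_of_nonneg_left _ hΛ0.le
    nlinarith
  nlinarith

/-- choice of tilting parameters -/
lemma choose_params (k : ℕ) (hk : 2 ≤ k) {α β : ℝ} (hβ : 0 < β) (hαβ : β < α)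
    (hI : I2def k α β < 1) :
    ∃ t s η ε : ℝ, 0 < t ∧ 0 < s ∧ 0 < η ∧ 0 < ε ∧ Ifun k α β t + t * η + 3 * ε < 1 ∧
      Ifun k α β t + 3 * ε < Ifun k α β (t - s) ∧ Ifun k α β t + 3 * ε < Ifun k α β (t + s) + s * η := by
  have hα : 0 < α := hβ.trans hαβ
  obtain ⟨T, hT, hdT⟩ := dI_neg k hk hα hβ
  set δ := 1 - I2def k α β with hδ
  have hδ0 : 0 < δ := by linarith
  set r := min 1 (δ / (4 * T)) with hr
  have hr0 : 0 < r := lt_min one_pos (by positivity)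
  have hr1 : r ≤ 1 := min_le_left _ _
  have hrT : r * T ≤ δ / 4 := by
    have : r ≤ δ / (4 * T) := min_le_right _ _
    calc r * T ≤ δ / (4 * T) * T := by gcongr
      _ = δ / 4 := by field_simp
  have hd0 := dI_zero k hk hβ hαβ
  obtain ⟨t, ht, htr⟩ := intermediate_value_Icc' hT.le (cont_dI k α β).continuousOn
    (show -r ∈ Set.Icc (dI k α β T) (dI k α β 0) from ⟨by linarith, by linarith⟩)
  have ht0 : 0 < t := by
    rcases ht.1.eq_or_lt with h | h
    · rw [← h] at htr; linarith
    · exact h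
  have hder := hasDeriv_Ifun k α β t
  rw [htr] at hder
  have hlit := hder.isLittleO.def (show 0 < r / 2 by positivity)
  rw [Metric.eventually_nhds_iff] at hlit
  obtain ⟨ρ, hρ, hlit⟩ := hlit
  set s := ρ / 2 with hs
  have hs0 : 0 < s := by positivity
  have hp := hlit (y := t + s) (by rw [Real.dist_eq]; rw [abs_lt]; constructor <;> linarith)
  have hm := hlit (y := t - s) (by rw [Real.dist_eq]; rw [abs_lt]; constructor <;> linarith)
  simp only [Real.norm_eq_abs, smul_eq_mul, add_sub_cancel_left, abs_of_pos hs0] at hp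
  have e1 : t - s - t = -s := by ring
  simp only [Real.norm_eq_abs, smul_eq_mul, e1, abs_neg, abs_of_pos hs0] at hm
  rw [abs_le] at hp hm
  have hIt : Ifun k α β t ≤ I2def k α β := Ifun_le k hk hα hβ ht0.le
  have htT : t * (2 * r) ≤ δ / 2 := by
    have : t * r ≤ T * r := mul_le_mul_of_nonneg_right ht.2 hr0.le
    linarith
  refine ⟨t, s, 2 * r, min (δ / 12) (s * r / 12), ht0, hs0, by positivity, lt_min (by positivity) (by positivity), ?_, ?_, ?_⟩
  · have := min_le_left (δ / 12) (s * r / 12)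
    linarith
  · have := min_le_right (δ / 12) (s * r / 12)
    have : 0 < s * r := by positivity
    linarith [hm.1]
  · have := min_le_right (δ / 12) (s * r / 12)
    have : 0 < s * r := by positivity
    linarith [hp.1]


/-- edge weights -/
noncomputable def ew (k : ℕ) (α β : ℝ) (m : ℕ) (σ : Fin (2 * m) → Bool) (e : KSet (2 * m) k) : ℝ :=
  edgeP (pParam k α (2 * m)) (pParam k β (2 * m)) σ e.1

lemma log_nonneg' (m : ℕ) : 0 ≤ Real.log (2 * m) := by
  have := Real.log_natCast_nonneg (2 * m)
  push_cast at this; exact this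

lemma ew_nonneg {k : ℕ} {α β : ℝ} (hβ : 0 < β) (hαβ : β < α) (m : ℕ) (σ : Fin (2 * m) → Bool)
    (e : KSet (2 * m) k) : 0 ≤ ew k α β m σ e := by
  have h := log_nonneg' m
  have hα : 0 < α := hβ.trans hαβ
  unfold ew edgeP pParam
  push_cast
  split_ifs <;> positivity

lemma ew_le {k : ℕ} {α β : ℝ} (hαβ : β < α) (m : ℕ) (σ : Fin (2 * m) → Bool)
    (e : KSet (2 * m) k) : ew k α β m σ e ≤ pParam k α (2 * m) := by
  have h := log_nonneg' m
  unfold ew edgeP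
  split_ifs
  · exact le_rfl
  · unfold pParam; push_cast
    gcongr

lemma p_choose {k : ℕ} (hk : 2 ≤ k) (α : ℝ) {m : ℕ} (hm : k ≤ m) :
    pParam k α (2 * m) * ((2 * m - 2).choose (k - 2) : ℝ)
      = α * Real.log (2 * m) * ((k : ℝ) - 1) / (2 * m - 1) := by
  unfold pParam
  have h : (2 * m - 1) * (2 * m - 2).choose (k - 2) = (2 * m - 1).choose (k - 1) * (k - 1) := by
    have := Nat.add_one_mul_choose_eq (2 * m - 2) (k - 2)
    have e1 : 2 * m - 2 + 1 = 2 * m - 1 := by omega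
    have e2 : k - 2 + 1 = k - 1 := by omega
    rw [e1, e2] at this
    exact this
  have h' : (2 * (m : ℝ) - 1) * ((2 * m - 2).choose (k - 2) : ℝ)
      = ((2 * m - 1).choose (k - 1) : ℝ) * ((k : ℝ) - 1) := by
    have := congrArg (Nat.cast : ℕ → ℝ) h
    push_cast [Nat.cast_sub (by omega : 1 ≤ 2 * m), Nat.cast_sub (by omega : 1 ≤ k)] at this
    exact this
  have hC : (0:ℝ) < ((2 * m - 1).choose (k - 1) : ℝ) := by
    exact_mod_cast Nat.choose_pos (by omega)
  have hm1 : (0:ℝ) < 2 * m - 1 := by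
    have : (1:ℝ) ≤ m := by exact_mod_cast (by omega : 1 ≤ m)
    linarith
  push_cast
  field_simp
  linear_combination α * Real.log (2 * m) * h'

lemma p_card {k : ℕ} (hk : 2 ≤ k) (α : ℝ) {m : ℕ} (hm : k ≤ m) :
    pParam k α (2 * m) * (Fintype.card (KSet (2 * m) k) : ℝ)
      = α * Real.log (2 * m) * (2 * m) / k := by
  have hc : Fintype.card (KSet (2 * m) k) = (2 * m).choose k := by
    have := card_between (k := k) (∅ : Finset (Fin (2 * m))) univ (subset_univ _) (by simp)
    simpa [Fintype.card_subtype] using this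
  have h : (2 * m) * (2 * m - 1).choose (k - 1) = (2 * m).choose k * k := by
    have := Nat.add_one_mul_choose_eq (2 * m - 1) (k - 1)
    have e1 : 2 * m - 1 + 1 = 2 * m := by omega
    have e2 : k - 1 + 1 = k := by omega
    rw [e1, e2] at this
    exact this
  have h' := congrArg (Nat.cast : ℕ → ℝ) h
  push_cast at h'
  have hC : (0:ℝ) < ((2 * m - 1).choose (k - 1) : ℝ) := by
    exact_mod_cast Nat.choose_pos (by omega)
  have hk0 : (0:ℝ) < k := by exact_mod_cast (by omega : 0 < k)
  rw [hc]
  unfold pParam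
  push_cast
  field_simp
  linear_combination -α * Real.log (2 * m) * h'

lemma p_nonneg {k : ℕ} {α : ℝ} (hα : 0 < α) (m : ℕ) : 0 ≤ pParam k α (2 * m) := by
  have h := log_nonneg' m
  unfold pParam; push_cast; positivity

lemma tendsto_log_div : Tendsto (fun m : ℕ => Real.log (2 * m) / (2 * m - 1)) atTop (nhds 0) := by
  have h1 : Tendsto (fun x : ℝ => Real.log x / x) atTop (nhds 0) :=
    Real.isLittleO_log_id_atTop.tendsto_div_nhds_zero
  have h2 : Tendsto (fun m : ℕ => 2 * (m : ℝ)) atTop atTop :=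
    tendsto_natCast_atTop_atTop.const_mul_atTop two_pos
  have h3 := ((h1.comp h2).const_mul 2)
  rw [mul_zero] at h3
  refine squeeze_zero' ?_ ?_ h3
  · filter_upwards [eventually_ge_atTop 1] with m hm
    have : (1:ℝ) ≤ m := by exact_mod_cast hm
    exact div_nonneg (log_nonneg' m) (by linarith)
  · filter_upwards [eventually_ge_atTop 1] with m hm
    have : (1:ℝ) ≤ m := by exact_mod_cast hm
    have hl := log_nonneg' m
    simp only [Function.comp]
    rw [← mul_div_assoc, div_le_div_iff₀ (by linarith) (by linarith)]
    nlinarith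

lemma tendsto_log : Tendsto (fun m : ℕ => Real.log (2 * m)) atTop atTop :=
  Real.tendsto_log_atTop.comp (tendsto_natCast_atTop_atTop.const_mul_atTop two_pos)

lemma tendsto_p {k : ℕ} (hk : 2 ≤ k) {α : ℝ} (hα : 0 < α) :
    Tendsto (fun m : ℕ => pParam k α (2 * m)) atTop (nhds 0) := by
  have h := tendsto_log_div.const_mul (α * ((k : ℝ) - 1))
  rw [mul_zero] at h
  refine squeeze_zero' (Eventually.of_forall fun m => p_nonneg hα m) ?_ h
  filter_upwards [eventually_ge_atTop k] with m hm
  have h1 := p_choose hk α hm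
  have h2 : (1:ℝ) ≤ ((2 * m - 2).choose (k - 2) : ℝ) := by
    exact_mod_cast Nat.choose_pos (by omega)
  calc pParam k α (2 * m) ≤ pParam k α (2 * m) * ((2 * m - 2).choose (k - 2) : ℝ) :=
        le_mul_of_one_le_right (p_nonneg hα m) h2
    _ = _ := by rw [h1]; ring

/-- total weight of edges at v hitting A elsewhere -/
lemma hit_le {k : ℕ} (hk : 2 ≤ k) {α β : ℝ} (hβ : 0 < β) (hαβ : β < α) {m : ℕ} (hm : k ≤ m)
    (σ : Fin (2 * m) → Bool) (v : Fin (2 * m)) (A : Finset (Fin (2 * m))) :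
    ∑ e : KSet (2 * m) k, ew k α β m σ e *
      (if v ∈ e.1 ∧ ∃ j ∈ A, j ≠ v ∧ j ∈ e.1 then 1 else 0)
    ≤ A.card * (α * Real.log (2 * m) * ((k : ℝ) - 1) / (2 * m - 1)) := by
  have hα : 0 < α := hβ.trans hαβ
  calc _ ≤ ∑ e : KSet (2 * m) k, pParam k α (2 * m) *
      (if v ∈ e.1 ∧ ∃ j ∈ A, j ≠ v ∧ j ∈ e.1 then 1 else 0) := by
        refine Finset.sum_le_sum fun e _ => mul_le_mul_of_nonneg_right (ew_le hαβ m σ e) ?_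
        split_ifs <;> norm_num
    _ = pParam k α (2 * m) * ((univ.filter (fun e : KSet (2 * m) k =>
          v ∈ e.1 ∧ ∃ j ∈ A, j ≠ v ∧ j ∈ e.1)).card : ℝ) := by
        rw [← Finset.mul_sum, Finset.sum_boole]
    _ ≤ pParam k α (2 * m) * ((A.card * (2 * m - 2).choose (k - 2) : ℕ) : ℝ) := by
        refine mul_le_mul_of_nonneg_left ?_ (p_nonneg hα m)
        exact_mod_cast card_hit hk v A
    _ = _ := by rw [← p_choose hk α hm]; push_cast; ring

/-- exponent for small discrepancy -/
lemma small_exponent {k : ℕ} (hk : 2 ≤ k) {α β : ℝ} (hβ : 0 < β) (hαβ : β < α) {t δ : ℝ}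
    (ht : 0 ≤ t) (hδ : 0 < δ) :
    ∃ ε > 0, ∀ᶠ m : ℕ in atTop, ∀ σ x : Fin (2 * m) → Bool, balanced σ →
      ((univ.filter (fun i => σ i ≠ x i)).card : ℝ) ≤ ε * (2 * m) →
      ((univ.filter (fun i => σ i ≠ x i)).card : ℝ) * (Real.log (2 * m) * (Ifun k α β t - δ))
      ≤ ∑ e : KSet (2 * m) k, ew k α β m σ e * (1 - Real.exp (-(t * cE σ x e.1))) := by
  have hα : 0 < α := hβ.trans hαβ
  have hk1 : (0:ℝ) < (k : ℝ) - 1 := by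
    have : (2:ℝ) ≤ k := by exact_mod_cast hk
    linarith
  set K := Real.exp (t * (k:ℝ)^2) + 1 with hK
  have hK0 : 0 < K := by positivity
  refine ⟨δ / (4 * K * α * ((k:ℝ) - 1)), by positivity, ?_⟩
  set ε := δ / (4 * K * α * ((k:ℝ) - 1)) with hε
  have hε0 : 0 < ε := by positivity
  have hJ := tendsto_Jn k α β (fun a => 1 - Real.exp (-(t * dk k a)))
  have hJ' := hJ.eventually (lt_mem_nhds (show Ifun k α β t - δ / 2 < Ifun k α β t by linarith))
  filter_upwards [hJ', eventually_ge_atTop k] with m hJm hm σ x hσ hS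
  set S := univ.filter (fun i => σ i ≠ x i) with hSdef
  have hm1 : (1:ℝ) ≤ m := by exact_mod_cast (by omega : 1 ≤ m)
  have hL := log_nonneg' m
  have hpt : ∀ e : KSet (2 * m) k, ∑ v ∈ S, (ew k α β m σ e *
      (if v ∈ e.1 then (1 - Real.exp (-(t * dk k (oth σ v e.1)))) else 0)
      - K * (ew k α β m σ e * (if v ∈ e.1 ∧ ∃ j ∈ S, j ≠ v ∧ j ∈ e.1 then 1 else 0)))
      ≤ ew k α β m σ e * (1 - Real.exp (-(t * cE σ x e.1))) := by
    intro e
    have hw := ew_nonneg hβ hαβ m σ e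
    by_cases h0 : ∀ v ∈ S, v ∉ e.1
    · rw [Finset.sum_eq_zero]
      · rw [cE_zero σ x e.1]
        · simp
        · intro j hj
          by_contra hne
          exact h0 j (by simp [hSdef, hne]) hj
      · intro v hv
        have h := h0 v hv
        rw [if_neg h, if_neg (fun hh => h hh.1)]; simp
    · push Not at h0
      obtain ⟨v, hvS, hve⟩ := h0
      by_cases h1 : ∃ j ∈ S, j ≠ v ∧ j ∈ e.1
      · have hneg : ∀ u ∈ S, (ew k α β m σ e *
          (if u ∈ e.1 then (1 - Real.exp (-(t * dk k (oth σ u e.1)))) else 0)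
          - K * (ew k α β m σ e * (if u ∈ e.1 ∧ ∃ j ∈ S, j ≠ u ∧ j ∈ e.1 then 1 else 0)))
          ≤ if u ∈ e.1 then - (ew k α β m σ e * Real.exp (t * (k:ℝ)^2)) else 0 := by
          intro u hu
          by_cases hue : u ∈ e.1
          · have h2 : ∃ j ∈ S, j ≠ u ∧ j ∈ e.1 := by
              by_cases huv : u = v
              · rw [huv]; exact h1
              · exact ⟨v, hvS, fun h => huv h.symm, hve⟩
            rw [if_pos hue, if_pos ⟨hue, h2⟩, if_pos hue]
            have := mul_nonneg hw (Real.exp_pos (-(t * dk k (oth σ u e.1)))).le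
            rw [hK]; nlinarith
          · rw [if_neg hue, if_neg (fun hh => hue hh.1), if_neg hue]; simp
        refine (Finset.sum_le_sum hneg).trans ?_
        have h3 : (∑ u ∈ S, if u ∈ e.1 then - (ew k α β m σ e * Real.exp (t * (k:ℝ)^2)) else 0)
            ≤ - (ew k α β m σ e * Real.exp (t * (k:ℝ)^2)) := by
          rw [← Finset.add_sum_erase _ _ hvS, if_pos hve]
          have : (∑ u ∈ S.erase v, if u ∈ e.1 then - (ew k α β m σ e * Real.exp (t * (k:ℝ)^2)) else 0) ≤ 0 := by
            refine Finset.sum_nonpos fun u _ => ?_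
            split_ifs
            · have := mul_nonneg hw (Real.exp_pos (t * (k:ℝ)^2)).le; linarith
            · exact le_rfl
          linarith
        refine h3.trans ?_
        have h4 : Real.exp (-(t * cE σ x e.1)) ≤ Real.exp (t * (k:ℝ)^2) := by
          rw [Real.exp_le_exp]
          have := (abs_le.1 (cE_abs_le σ x e.1)).1
          rw [e.2] at this
          nlinarith
        nlinarith [mul_le_mul_of_nonneg_left h4 hw]
      · push Not at h1
        rw [Finset.sum_eq_single v]
        · rw [if_pos hve, if_neg (fun hh => by
            obtain ⟨j, hj, hjv, hje⟩ := hh.2; exact h1 j hj hjv hje)]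
          have : cE σ x e.1 = dk k (oth σ v e.1) := by
            refine cE_single σ x e.1 e.2 v hve (by simpa [hSdef] using hvS) ?_
            intro j hj hjv
            by_contra hne
            exact h1 j (by simp [hSdef, hne]) hjv hj
          rw [this]; simp
        · intro u hu huv
          have := h1 u hu huv
          rw [if_neg this, if_neg (fun hh => this hh.1)]; simp
        · intro h; exact absurd hvS h
  refine le_trans ?_ (Finset.sum_le_sum fun e _ => hpt e)
  rw [Finset.sum_comm]
  have hv : ∀ v ∈ S, Real.log (2 * m) * (Ifun k α β t - δ) ≤ ∑ e : KSet (2 * m) k, (ew k α β m σ e *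
      (if v ∈ e.1 then (1 - Real.exp (-(t * dk k (oth σ v e.1)))) else 0)
      - K * (ew k α β m σ e * (if v ∈ e.1 ∧ ∃ j ∈ S, j ≠ v ∧ j ∈ e.1 then 1 else 0))) := by
    intro v _
    rw [Finset.sum_sub_distrib, ← Finset.mul_sum]
    have h1 := sum_edgeP_oth (k := k) α β hσ v (fun a => 1 - Real.exp (-(t * dk k a)))
    have h2 := hit_le hk hβ hαβ hm σ v S
    unfold ew at h2 ⊢
    rw [h1]
    have h3 : K * ((S.card : ℝ) * (α * Real.log (2 * m) * ((k : ℝ) - 1) / (2 * m - 1)))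
        ≤ Real.log (2 * m) * (δ / 2) := by
      have h4 : (S.card : ℝ) / (2 * m - 1) ≤ 2 * ε := by
        rw [div_le_iff₀ (by linarith)]
        nlinarith
      have h5 : K * ((S.card : ℝ) * (α * Real.log (2 * m) * ((k : ℝ) - 1) / (2 * m - 1)))
          = (S.card : ℝ) / (2 * m - 1) * (K * α * Real.log (2 * m) * ((k : ℝ) - 1)) := by ring
      rw [h5]
      have h6 : (2 * ε) * (K * α * Real.log (2 * m) * ((k : ℝ) - 1)) = Real.log (2 * m) * (δ / 2) := by
        rw [hε]; field_simp; ring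
      rw [← h6]
      exact mul_le_mul_of_nonneg_right h4 (by positivity)
    have h7 := mul_le_mul_of_nonneg_left hJm.le hL
    have h8 := mul_le_mul_of_nonneg_left h2 hK0.le
    linarith
  calc (S.card : ℝ) * (Real.log (2 * m) * (Ifun k α β t - δ))
      = ∑ v ∈ S, Real.log (2 * m) * (Ifun k α β t - δ) := by rw [sum_const, nsmul_eq_mul]
    _ ≤ _ := Finset.sum_le_sum hv

lemma large_exponent {k : ℕ} (hk : 2 ≤ k) {α β : ℝ} (hβ : 0 < β) (hαβ : β < α) {ε : ℝ}
    (hε : 0 < ε) :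
    ∃ τ > 0, ∃ c > 0, ∀ᶠ m : ℕ in atTop, ∀ σ x : Fin (2 * m) → Bool, balanced σ → balanced x →
      ε * (2 * m) ≤ ((univ.filter (fun i => σ i ≠ x i)).card : ℝ) →
      ((univ.filter (fun i => σ i ≠ x i)).card : ℝ) ≤ m →
      c * (m * Real.log (2 * m))
      ≤ ∑ e : KSet (2 * m) k, ew k α β m σ e * (1 - Real.exp (-(τ * cE σ x e.1))) := by
  have hα : 0 < α := hβ.trans hαβ
  have hk2 : (2:ℝ) ≤ k := by exact_mod_cast hk
  have hk1 : (0:ℝ) < (k : ℝ) - 1 := by linarith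
  have hab : 0 < α - β := by linarith
  have hk0 : (0:ℝ) < k := by linarith
  set κ := ((k : ℝ) - 1) / 2 ^ (k - 1) / 2 with hκ
  have hκ0 : 0 < κ := by positivity
  set G := (α - β) * ε * κ with hG
  have hG0 : 0 < G := by positivity
  set τ := min (1 / (k:ℝ)^2) (G / (4 * α * (k:ℝ)^4)) with hτ
  have hτ0 : 0 < τ := lt_min (by positivity) (by positivity)
  refine ⟨τ, hτ0, τ * (G / 2), by positivity, ?_⟩
  have hlim := (tendsto_ratio2 k hk).eventually (lt_mem_nhds (show κ < ((k : ℝ) - 1) / 2 ^ (k - 1) by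
    rw [hκ]; exact half_lt_self (by positivity)))
  filter_upwards [hlim, eventually_ge_atTop k] with m hlm hm σ x hσ hx hS1 hS2
  have hm1 : (1:ℝ) ≤ m := by exact_mod_cast (by omega : 1 ≤ m)
  have hL := log_nonneg' m
  set u := (univ.filter (fun i => σ i ≠ x i)).card with hu
  have hmean := mean_D hk (pParam k α (2 * m)) (pParam k β (2 * m)) hσ hx u hu.symm
  have hpt : ∀ e : KSet (2 * m) k, τ * (ew k α β m σ e * cE σ x e.1)
      - τ^2 * (pParam k α (2 * m) * (k:ℝ)^4)
      ≤ ew k α β m σ e * (1 - Real.exp (-(τ * cE σ x e.1))) := by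
    intro e
    have hw := ew_nonneg hβ hαβ m σ e
    have hwp := ew_le hαβ m σ e
    have hc := cE_abs_le σ x e.1
    rw [e.2] at hc
    set c := cE σ x e.1
    have h1 : |-(τ * c)| ≤ 1 := by
      rw [abs_neg, abs_mul, abs_of_pos hτ0]
      calc τ * |c| ≤ 1 / (k:ℝ)^2 * (k:ℝ)^2 := by
            apply mul_le_mul (min_le_left _ _) hc (abs_nonneg _) (by positivity)
        _ = 1 := by field_simp
    have h2 := (abs_le.1 (Real.abs_exp_sub_one_sub_id_le h1)).2
    have h3 : τ * c - (τ * c)^2 ≤ 1 - Real.exp (-(τ * c)) := by nlinarith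
    have h4 : c^2 ≤ (k:ℝ)^4 := by
      rw [← sq_abs]
      calc |c|^2 ≤ ((k:ℝ)^2)^2 := by gcongr
        _ = _ := by ring
    have h5 : ew k α β m σ e * c^2 ≤ pParam k α (2 * m) * (k:ℝ)^4 :=
      mul_le_mul hwp h4 (sq_nonneg _) (hw.trans hwp)
    have h6 := mul_le_mul_of_nonneg_left h3 hw
    have h7 := mul_le_mul_of_nonneg_left h5 (sq_nonneg τ)
    nlinarith
  refine le_trans ?_ (Finset.sum_le_sum fun e _ => hpt e)
  rw [Finset.sum_sub_distrib, ← Finset.mul_sum, sum_const, nsmul_eq_mul, card_univ]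
  unfold ew
  rw [hmean]
  have hp := p_card hk α hm
  have e1 : (Fintype.card (KSet (2 * m) k) : ℝ) * (τ ^ 2 * (pParam k α (2 * m) * (k:ℝ) ^ 4))
      = τ^2 * (2 * α * (k:ℝ)^3) * (m * Real.log (2 * m)) := by
    calc _ = τ^2 * (k:ℝ)^4 * (pParam k α (2 * m) * (Fintype.card (KSet (2 * m) k) : ℝ)) := by ring
      _ = _ := by rw [hp]; field_simp
  rw [e1]
  have hC : (0:ℝ) < ((2 * m - 1).choose (k - 1) : ℝ) := by
    exact_mod_cast Nat.choose_pos (by omega)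
  have e2 : G * (m * Real.log (2 * m)) ≤ (pParam k α (2 * m) - pParam k β (2 * m)) *
      ((m - 2).choose (k - 2) : ℝ) * ((u : ℝ) * (2 * m - u) / 2) := by
    have h1 : (pParam k α (2 * m) - pParam k β (2 * m)) * ((m - 2).choose (k - 2) : ℝ)
        = (α - β) * Real.log (2 * m) * ((((m - 2).choose (k - 2) : ℝ) * m
      / ((2 * m - 1).choose (k - 1) : ℝ)) / m) := by
      unfold pParam; push_cast; field_simp
    rw [h1]
    have h2 : ε * m * m ≤ (u : ℝ) * (2 * m - u) / 2 := by nlinarith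
    calc G * (m * Real.log (2 * m)) = (α - β) * Real.log (2 * m) * (κ / m) * (ε * m * m) := by
          rw [hG]; field_simp
      _ ≤ _ := by gcongr
  have e3 : τ * (2 * α * (k:ℝ)^3) ≤ G / 2 := by
    have : τ ≤ G / (4 * α * (k:ℝ)^4) := min_le_right _ _
    calc τ * (2 * α * (k:ℝ)^3) ≤ G / (4 * α * (k:ℝ)^4) * (2 * α * (k:ℝ)^4) := by
          gcongr
          · linarith
          · norm_num
      _ = G / 2 := by field_simp; norm_num
  have e4 : 0 ≤ (m:ℝ) * Real.log (2 * m) := by positivity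
  have e5 := mul_le_mul_of_nonneg_left e2 hτ0.le
  have e6 : τ^2 * (2 * α * (k:ℝ)^3) * (m * Real.log (2 * m)) ≤ τ * (G / 2) * (m * Real.log (2 * m)) := by
    have := mul_le_mul_of_nonneg_left e3 hτ0.le
    refine mul_le_mul_of_nonneg_right ?_ e4
    linarith
  linarith


lemma sum_pow_diff {n : ℕ} (σ : Fin n → Bool) (y : ℝ) :
    ∑ x : Fin n → Bool, y ^ (univ.filter (fun i => σ i ≠ x i)).card = (1 + y) ^ n := by
  have h := Finset.prod_univ_sum (fun _ : Fin n => (Finset.univ : Finset Bool))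
    (fun i b => if σ i ≠ b then y else (1:ℝ))
  simp only [Fintype.piFinset_univ] at h
  have h1 : ∀ i : Fin n, (∑ b : Bool, if σ i ≠ b then y else (1:ℝ)) = 1 + y := by
    intro i
    rw [Fintype.sum_bool]
    cases σ i <;> simp [add_comm]
  rw [Finset.prod_congr rfl (fun i _ => h1 i)] at h
  simp only [Finset.prod_const, Finset.card_univ, Fintype.card_fin] at h
  rw [h]
  refine Finset.sum_congr rfl fun x _ => ?_
  rw [← Finset.prod_filter, Finset.prod_const]

lemma balanced_negB {m : ℕ} {x : Fin (2 * m) → Bool} (hx : balanced x) : balanced (negB x) := by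
  have h := bal_card hx false
  unfold balanced
  have : (univ.filter (fun i => negB x i = true)) = univ.filter (fun i => x i = false) := by
    ext i; simp [negB]
  rw [this, h]

lemma negB_negB {n : ℕ} (x : Fin n → Bool) : negB (negB x) = x := by
  funext i; simp [negB]

lemma diff_negB {n : ℕ} (σ x : Fin n → Bool) :
    (univ.filter (fun i => σ i ≠ negB x i)).card + (univ.filter (fun i => σ i ≠ x i)).card = n := by
  have h := Finset.card_filter_add_card_filter_not (s := (univ : Finset (Fin n)))
    (fun i => σ i ≠ x i)
  have e : (univ.filter (fun i => σ i ≠ negB x i)) = univ.filter (fun i => ¬ σ i ≠ x i) := by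
    ext i; simp [negB]
  rw [e]
  simp only [Finset.card_univ, Fintype.card_fin] at h
  omega

lemma success_bound {k : ℕ} (hk : 2 ≤ k) {α β : ℝ} (hβ : 0 < β) (hαβ : β < α)
    (hI : 1 < I2def k α β) :
    ∃ b : ℕ → ℝ, Tendsto b atTop (nhds 0) ∧ ∀ᶠ m : ℕ in atTop, ∀ σ : Fin (2 * m) → Bool,
      balanced σ → ∀ est : (KSet (2 * m) k → Bool) → (Fin (2 * m) → Bool), isTruncMax est →
      1 - b m ≤ Ex (ew k α β m σ) (fun E => if est E = σ ∨ est E = negB σ then 1 else 0) := by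
  have hα : 0 < α := hβ.trans hαβ
  obtain ⟨t, ht, hIt⟩ := exists_Ifun k hk hI
  set δ := (Ifun k α β t - 1) / 2 with hδdef
  have hδ : 0 < δ := by rw [hδdef]; linarith
  obtain ⟨ε, hε, hsm⟩ := small_exponent hk hβ hαβ ht hδ
  obtain ⟨τ, hτ, c, hc, hlg⟩ := large_exponent hk hβ hαβ hε
  refine ⟨fun m => (Real.exp (Real.exp (-(δ * Real.log (2 * m)))) - 1) + Real.exp (-(m:ℝ)), ?_, ?_⟩
  · have h1 : Tendsto (fun m : ℕ => Real.exp (-(δ * Real.log (2 * m)))) atTop (nhds 0) :=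
      Real.tendsto_exp_neg_atTop_nhds_zero.comp (tendsto_log.const_mul_atTop hδ)
    have h2 : Tendsto (fun m : ℕ => Real.exp (-(m:ℝ))) atTop (nhds 0) :=
      Real.tendsto_exp_neg_atTop_nhds_zero.comp tendsto_natCast_atTop_atTop
    have h3 := (((Real.continuous_exp.tendsto 0).comp h1).sub_const 1).add h2
    simpa using h3
  · have hcL := (tendsto_log.const_mul_atTop hc).eventually_ge_atTop 3
    have hp1 := (tendsto_p hk hα).eventually_le_const (show (0:ℝ) < 1 by norm_num)
    filter_upwards [hsm, hlg, hcL, hp1, eventually_ge_atTop 1] with m hsm hlg hcL hp1 hm σ hσ est hest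
    set L := Real.log (2 * m) with hL
    have hm1 : (1:ℝ) ≤ m := by exact_mod_cast hm
    have h0 := ew_nonneg (k := k) hβ hαβ m σ
    have h1 : ∀ e, ew k α β m σ e ≤ 1 := fun e => (ew_le hαβ m σ e).trans hp1
    set y := Real.exp (-((1 + δ) * L)) with hy
    have hy0 : 0 < y := Real.exp_pos _
    set X := univ.filter (fun x : Fin (2 * m) → Bool => balanced x ∧ x ≠ σ ∧
      (univ.filter (fun i => σ i ≠ x i)).card ≤ m) with hX
    have hpt : ∀ E, (1:ℝ) - (∑ x ∈ X, if lin (fun e : KSet (2 * m) k => cE σ x e.1) E ≤ 0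
        then (1:ℝ) else 0) ≤ if est E = σ ∨ est E = negB σ then 1 else 0 := by
      intro E
      have hnn : ∀ x ∈ X, (0:ℝ) ≤ if lin (fun e : KSet (2 * m) k => cE σ x e.1) E ≤ 0
        then (1:ℝ) else 0 := fun x _ => by split_ifs <;> norm_num
      by_cases h : est E = σ ∨ est E = negB σ
      · rw [if_pos h]
        have := Finset.sum_nonneg hnn
        linarith
      · rw [if_neg h]
        push Not at h
        have key : ∃ x ∈ X, truncObj E σ ≤ truncObj E x := by
          have hb := hest E
          have hle := hb.2 σ hσ
          by_cases hcard : (univ.filter (fun i => σ i ≠ est E i)).card ≤ m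
          · exact ⟨est E, by simp only [hX, mem_filter, mem_univ, true_and]; exact ⟨hb.1, h.1, hcard⟩, hle⟩
          · refine ⟨negB (est E), ?_, by rw [obj_negB]; exact hle⟩
            simp only [hX, mem_filter, mem_univ, true_and]
            refine ⟨balanced_negB hb.1, ?_, ?_⟩
            · intro h'
              apply h.2
              rw [← h', negB_negB]
            · have := diff_negB σ (est E)
              omega
        obtain ⟨x, hx, hxo⟩ := key
        have hd := obj_diff E σ x
        have h2 := Finset.single_le_sum hnn hx
        rw [if_pos (by linarith)] at h2
        linarith
    have hmono := Ex_mono h0 h1 hpt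
    rw [Ex_sub, Ex_one, Ex_sum] at hmono
    refine le_trans ?_ hmono
    have hbd : ∀ x ∈ X, Ex (ew k α β m σ) (fun E => if lin (fun e : KSet (2 * m) k => cE σ x e.1) E ≤ 0
        then (1:ℝ) else 0) ≤ y ^ (univ.filter (fun i => σ i ≠ x i)).card + Real.exp (-(c * (m * L))) := by
      intro x hx
      simp only [hX, mem_filter, mem_univ, true_and] at hx
      rcases le_total ((univ.filter (fun i => σ i ≠ x i)).card : ℝ) (ε * (2 * m)) with hle | hge
      · have ha := hsm σ x hσ hle
        have hb := chernoff h0 h1 (fun e : KSet (2 * m) k => cE σ x e.1) ht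
        have hc2 : Real.exp (-∑ e : KSet (2 * m) k, ew k α β m σ e * (1 - Real.exp (-(t * cE σ x e.1))))
            ≤ y ^ (univ.filter (fun i => σ i ≠ x i)).card := by
          rw [hy, ← Real.exp_nat_mul]
          apply Real.exp_le_exp.2
          have : Ifun k α β t - δ = 1 + δ := by rw [hδdef]; ring
          rw [this] at ha
          linarith
        have := Real.exp_pos (-(c * (m * L)))
        linarith
      · have ha := hlg σ x hσ hx.1 hge (by exact_mod_cast hx.2.2)
        have hb := chernoff h0 h1 (fun e : KSet (2 * m) k => cE σ x e.1) hτ.le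
        have hc2 := Real.exp_le_exp.2 (neg_le_neg ha)
        have := pow_pos hy0 (univ.filter (fun i => σ i ≠ x i)).card
        linarith
    have hsum := Finset.sum_le_sum hbd
    rw [Finset.sum_add_distrib, Finset.sum_const, nsmul_eq_mul] at hsum
    have hs1 : ∑ x ∈ X, y ^ (univ.filter (fun i => σ i ≠ x i)).card ≤ (1 + y) ^ (2 * m) - 1 := by
      rw [← sum_pow_diff σ y, ← Finset.add_sum_erase univ _ (mem_univ σ)]
      have : ∑ x ∈ X, y ^ (univ.filter (fun i => σ i ≠ x i)).card
          ≤ ∑ x ∈ univ.erase σ, y ^ (univ.filter (fun i => σ i ≠ x i)).card := by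
        apply Finset.sum_le_sum_of_subset_of_nonneg
        · intro x hx
          simp only [hX, mem_filter, mem_univ, true_and] at hx
          simp [hx.2.1]
        · intro x _ _; positivity
      simpa using this
    have hs2 : (1 + y) ^ (2 * m) ≤ Real.exp (Real.exp (-(δ * L))) := by
      have : 1 + y ≤ Real.exp y := by linarith [Real.add_one_le_exp y]
      refine (pow_le_pow_left₀ (by positivity) this _).trans ?_
      rw [← Real.exp_nat_mul]
      apply Real.exp_le_exp.2
      have h2m : ((2 * m : ℕ):ℝ) = Real.exp L := by
        rw [hL, Real.exp_log (by positivity)]; push_cast; ring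
      rw [h2m, hy, ← Real.exp_add]
      apply Real.exp_le_exp.2
      linarith
    have hs3 : (X.card : ℝ) * Real.exp (-(c * (m * L))) ≤ Real.exp (-(m:ℝ)) := by
      have hXc : (X.card : ℝ) ≤ Real.exp (2 * m) := by
        have : X.card ≤ 2 ^ (2 * m) := by
          refine (Finset.card_le_univ X).trans ?_
          simp
        have h2 : (X.card : ℝ) ≤ 2 ^ (2 * m) := by exact_mod_cast this
        refine h2.trans ?_
        have h3 : (2:ℝ) ≤ Real.exp 1 := by linarith [Real.add_one_le_exp 1]
        refine (pow_le_pow_left₀ (by norm_num) h3 _).trans ?_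
        rw [← Real.exp_nat_mul]; push_cast; simp
      refine (mul_le_mul_of_nonneg_right hXc (Real.exp_pos _).le).trans ?_
      rw [← Real.exp_add]
      apply Real.exp_le_exp.2
      nlinarith
    linarith


lemma exists_balanced (m : ℕ) : ∃ σ : Fin (2 * m) → Bool, balanced σ := by
  obtain ⟨s, -, hs⟩ := Finset.exists_subset_card_eq (s := (univ : Finset (Fin (2 * m)))) (n := m)
    (by simp; omega)
  refine ⟨fun i => decide (i ∈ s), ?_⟩
  unfold balanced
  have : (univ.filter (fun i => decide (i ∈ s) = true)) = s := by ext i; simp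
  rw [this, hs]

lemma sum_sigProb (m : ℕ) : ∑ σ : Fin (2 * m) → Bool, sigProb (2 * m) σ = 1 := by
  unfold sigProb
  rw [← Finset.sum_filter, Finset.sum_const, nsmul_eq_mul, mul_one_div]
  apply div_self
  obtain ⟨σ, hσ⟩ := exists_balanced m
  have : 0 < (univ.filter (fun τ : Fin (2 * m) → Bool => balanced τ)).card :=
    Finset.card_pos.2 ⟨σ, by simpa using hσ⟩
  exact_mod_cast this.ne'

lemma sigProb_nonneg (n : ℕ) (σ : Fin n → Bool) : 0 ≤ sigProb n σ := by
  unfold sigProb; split_ifs <;> positivity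

lemma prEvent_eq (k m : ℕ) (α β : ℝ)
    (P : (Fin (2 * m) → Bool) → (KSet (2 * m) k → Bool) → Prop) :
    prEvent (2 * m) k (pParam k α (2 * m)) (pParam k β (2 * m)) P
      = ∑ σ, sigProb (2 * m) σ * Ex (ew k α β m σ) (fun E => if P σ E then 1 else 0) := by
  unfold prEvent Ex
  refine Finset.sum_congr rfl fun σ _ => ?_
  rw [Finset.mul_sum]
  refine Finset.sum_congr (by ext; simp) fun E _ => ?_
  rw [mul_assoc]
  rfl

lemma assemble {k : ℕ} (hk : 2 ≤ k) {α β : ℝ} (hβ : 0 < β) (hαβ : β < α)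
    (P : (m : ℕ) → (Fin (2 * m) → Bool) → (KSet (2 * m) k → Bool) → Prop) (b : ℕ → ℝ)
    (hb : Tendsto b atTop (nhds 0))
    (h : ∀ᶠ m : ℕ in atTop, ∀ σ : Fin (2 * m) → Bool, balanced σ →
      1 - b m ≤ Ex (ew k α β m σ) (fun E => if P m σ E then 1 else 0)) :
    Tendsto (fun m : ℕ => prEvent (2 * m) k (pParam k α (2 * m)) (pParam k β (2 * m)) (P m))
      atTop (nhds 1) := by
  have hα : 0 < α := hβ.trans hαβ
  have hp1 := (tendsto_p hk hα).eventually_le_const (show (0:ℝ) < 1 by norm_num)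
  have hlow : Tendsto (fun m => 1 - b m) atTop (nhds 1) := by
    simpa using hb.const_sub 1
  refine tendsto_of_tendsto_of_tendsto_of_le_of_le' hlow tendsto_const_nhds ?_ ?_
  · filter_upwards [h] with m hm
    rw [prEvent_eq]
    calc 1 - b m = ∑ σ : Fin (2 * m) → Bool, sigProb (2 * m) σ * (1 - b m) := by
          rw [← Finset.sum_mul, sum_sigProb, one_mul]
      _ ≤ _ := by
          refine Finset.sum_le_sum fun σ _ => ?_
          by_cases hσ : balanced σ
          · exact mul_le_mul_of_nonneg_left (hm σ hσ) (sigProb_nonneg _ _)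
          · simp [sigProb, hσ]
  · filter_upwards [hp1] with m hp1
    rw [prEvent_eq]
    refine le_trans ?_ (sum_sigProb m).le
    refine Finset.sum_le_sum fun σ _ => ?_
    have h1 : ∀ e, ew k α β m σ e ≤ 1 := fun e => (ew_le hαβ m σ e).trans hp1
    have := Ex_mono (ew_nonneg (k := k) hβ hαβ m σ) h1
      (f := fun E => if P m σ E then (1:ℝ) else 0) (g := fun _ => 1)
      (fun E => by split_ifs <;> norm_num)
    rw [Ex_one] at this
    exact mul_le_of_le_one_right (sigProb_nonneg _ _) this


section generic
variable {ι : Type*} [Fintype ι]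

lemma Ex_coord (w : ι → ℝ) (e0 : ι) : Ex w (fun E => if E e0 then 1 else 0) = w e0 := by
  have h := Ex_prod w (fun e b => if e = e0 then (if b then (1:ℝ) else 0) else 1)
  have h1 : (fun E : ι → Bool => ∏ e, (if e = e0 then (if E e then (1:ℝ) else 0) else 1))
      = fun E => if E e0 then 1 else 0 := by
    funext E
    rw [Finset.prod_ite_eq' univ e0]
    simp
  rw [h1] at h
  rw [h]
  have h2 : ∀ e, (w e * (if e = e0 then (if true = true then (1:ℝ) else 0) else 1)
      + (1 - w e) * (if e = e0 then (if false = true then (1:ℝ) else 0) else 1))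
      = if e = e0 then w e else 1 := by
    intro e; split_ifs <;> simp_all
  rw [Finset.prod_congr rfl (fun e _ => h2 e), Finset.prod_ite_eq' univ e0]
  simp

lemma Ex_lin (w c : ι → ℝ) : Ex w (lin c) = ∑ e, w e * c e := by
  have : lin c = fun E => ∑ e, c e * (if E e then 1 else 0) := by
    funext E
    unfold lin
    refine Finset.sum_congr rfl fun e _ => ?_
    split_ifs <;> simp
  rw [this, Ex_sum]
  refine Finset.sum_congr rfl fun e _ => ?_
  rw [Ex_const_mul, Ex_coord, mul_comm]

end generic

def Tn {n k : ℕ} (A : Finset (Fin n)) (v : Fin n) (e : KSet n k) : Prop :=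
  v ∈ e.1 ∧ ∀ j ∈ A, j ≠ v → j ∉ e.1

noncomputable def cv {n k : ℕ} (σ : Fin n → Bool) (A : Finset (Fin n)) (v : Fin n) (e : KSet n k) :
    ℝ := if Tn A v e then dk k (oth σ v e.1) else 0

def clean {n k : ℕ} (A : Finset (Fin n)) (v : Fin n) (E : KSet n k → Bool) : Prop :=
  ∀ e : KSet n k, E e = true → v ∈ e.1 → ∀ j ∈ A, j ≠ v → j ∉ e.1

lemma lin_congr {n k : ℕ} (σ : Fin n → Bool) (A : Finset (Fin n)) (v : Fin n)
    (E E' : KSet n k → Bool) (h : ∀ e, Tn A v e → E e = E' e) :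
    lin (cv σ A v) E = lin (cv σ A v) E' := by
  unfold lin
  refine Finset.sum_congr rfl fun e _ => ?_
  by_cases hT : Tn A v e
  · rw [h e hT]
  · simp [cv, hT]

lemma good_bound {n k : ℕ} {w : KSet n k → ℝ} (h0 : ∀ e, 0 ≤ w e) (h1 : ∀ e, w e ≤ 1)
    (σ : Fin n → Bool) (Ap Am : Finset (Fin n)) (r : ℕ) (hAp : Ap.card = r) (hAm : Am.card = r)
    (pi κ : ℝ) (hκ : 2 * κ ≤ 1)
    (hpi : ∀ v ∈ Ap ∪ Am, pi ≤ Ex w (fun E => if lin (cv σ (Ap ∪ Am) v) E < 0 then 1 else 0))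
    (hκ' : ∀ v ∈ Ap ∪ Am, Ex w (fun E => if clean (Ap ∪ Am) v E then (0:ℝ) else 1) ≤ κ) :
    (1 - 2 * κ) * (1 - 2 * Real.exp (-(r * pi))) ≤
      Ex w (fun E => if ∃ i ∈ Ap, ∃ j ∈ Am, lin (cv σ (Ap ∪ Am) i) E < 0 ∧
        lin (cv σ (Ap ∪ Am) j) E < 0 ∧ clean (Ap ∪ Am) i E ∧ clean (Ap ∪ Am) j E
        then 1 else 0) := by
  set A := Ap ∪ Am with hA
  let N : (KSet n k → Bool) → Finset (Fin n × Fin n) := fun E =>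
    (Ap ×ˢ Am).filter (fun p => lin (cv σ A p.1) E < 0 ∧ lin (cv σ A p.2) E < 0)
  let f : Fin n × Fin n → (KSet n k → Bool) → ℝ := fun p E =>
    if (N E).toList.head? = some p then 1 else 0
  let g : Fin n × Fin n → (KSet n k → Bool) → ℝ := fun p E =>
    if clean A p.1 E ∧ clean A p.2 E then 1 else 0
  have hNmem : ∀ E p, (N E).toList.head? = some p → p ∈ N E := by
    intro E p hp
    exact Finset.mem_toList.1 (List.mem_of_mem_head? hp)
  have hpt : ∀ E, ∑ p ∈ Ap ×ˢ Am, f p E * g p E ≤ if ∃ i ∈ Ap, ∃ j ∈ Am,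
      lin (cv σ A i) E < 0 ∧ lin (cv σ A j) E < 0 ∧ clean A i E ∧ clean A j E then 1 else 0 := by
    intro E
    by_cases hgood : ∃ i ∈ Ap, ∃ j ∈ Am,
      lin (cv σ A i) E < 0 ∧ lin (cv σ A j) E < 0 ∧ clean A i E ∧ clean A j E
    · rw [if_pos hgood]
      have : ∀ p ∈ Ap ×ˢ Am, f p E * g p E ≤ f p E := by
        intro p _
        simp only [f, g]
        split_ifs <;> norm_num
      refine (Finset.sum_le_sum this).trans ?_
      simp only [f]
      rcases hh : (N E).toList.head? with _ | q
      · simp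
      · simp only [Option.some.injEq]
        rw [Finset.sum_ite_eq]
        split_ifs <;> norm_num
    · rw [if_neg hgood]
      apply le_of_eq
      apply Finset.sum_eq_zero
      intro p hp
      simp only [f, g]
      by_cases hh : (N E).toList.head? = some p
      · have hm := hNmem E p hh
        simp only [N, mem_filter, mem_product] at hm
        rw [if_neg (c := clean A p.1 E ∧ clean A p.2 E), mul_zero]
        intro hc
        exact hgood ⟨p.1, hm.1.1, p.2, hm.1.2, hm.2.1, hm.2.2, hc.1, hc.2⟩
      · simp [hh]
  refine le_trans ?_ (Ex_mono h0 h1 hpt)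
  rw [Ex_sum]
  have hind : ∀ p ∈ Ap ×ˢ Am, Ex w (fun E => f p E * g p E) = Ex w (f p) * Ex w (g p) := by
    intro p hp
    rw [mem_product] at hp
    apply Ex_indep w (fun e => ∃ v ∈ A, Tn A v e)
    · intro E E' hE
      have hN : N E = N E' := by
        simp only [N]
        apply Finset.filter_congr
        intro q hq
        rw [mem_product] at hq
        rw [lin_congr σ A q.1 E E' (fun e he => hE e ⟨q.1, mem_union_left _ hq.1, he⟩),
          lin_congr σ A q.2 E E' (fun e he => hE e ⟨q.2, mem_union_right _ hq.2, he⟩)]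
      simp only [f, hN]
    · intro E E' hE
      have hcl : ∀ v ∈ A, ∀ E E' : KSet n k → Bool, (∀ e, ¬ (∃ v ∈ A, Tn A v e) → E e = E' e) →
          clean A v E → clean A v E' := by
        intro v hv E E' hE hc e he hve j hj hjv hje
        refine hc e ?_ hve j hj hjv hje
        rw [hE e, he]
        rintro ⟨u, hu, hT⟩
        by_cases huv : v = u
        · exact hT.2 j hj (huv ▸ hjv) hje
        · exact hT.2 v hv huv hve
      have hE' : ∀ e, ¬ (∃ v ∈ A, Tn A v e) → E' e = E e := fun e he => (hE e he).symm
      have e1 : clean A p.1 E ↔ clean A p.1 E' :=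
        ⟨hcl _ (mem_union_left _ hp.1) E E' hE, hcl _ (mem_union_left _ hp.1) E' E hE'⟩
      have e2 : clean A p.2 E ↔ clean A p.2 E' :=
        ⟨hcl _ (mem_union_right _ hp.2) E E' hE, hcl _ (mem_union_right _ hp.2) E' E hE'⟩
      simp only [g, e1, e2]
  rw [Finset.sum_congr rfl hind]
  have hg : ∀ p ∈ Ap ×ˢ Am, 1 - 2 * κ ≤ Ex w (g p) := by
    intro p hp
    rw [mem_product] at hp
    have a1 := hκ' p.1 (mem_union_left _ hp.1)
    have a2 := hκ' p.2 (mem_union_right _ hp.2)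
    have : Ex w (fun E => (1:ℝ) - ((if clean A p.1 E then (0:ℝ) else 1)
        + (if clean A p.2 E then (0:ℝ) else 1))) ≤ Ex w (g p) := by
      apply Ex_mono h0 h1
      intro E
      simp only [g]
      split_ifs <;> simp_all
    rw [Ex_sub, Ex_one, Ex_add] at this
    linarith
  have hf0 : ∀ p, 0 ≤ Ex w (f p) := by
    intro p
    have : Ex w (fun _ => 0) ≤ Ex w (f p) := by
      apply Ex_mono h0 h1
      intro E
      simp only [f]
      split_ifs <;> norm_num
    simpa [Ex] using this
  have hstep : ∑ p ∈ Ap ×ˢ Am, Ex w (f p) * (1 - 2 * κ) ≤ ∑ p ∈ Ap ×ˢ Am, Ex w (f p) * Ex w (g p) :=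
    Finset.sum_le_sum fun p hp => mul_le_mul_of_nonneg_left (hg p hp) (hf0 p)
  refine le_trans ?_ hstep
  rw [← Finset.sum_mul, mul_comm, ← Ex_sum]
  refine mul_le_mul_of_nonneg_right ?_ (by linarith)
  let z : Fin n → (KSet n k → Bool) → ℝ := fun v E => 1 - (if lin (cv σ A v) E < 0 then (1:ℝ) else 0)
  have hz : ∀ v ∈ A, Ex w (z v) ≤ Real.exp (-pi) := by
    intro v hv
    have := hpi v hv
    have h2 : Ex w (z v) = 1 - Ex w (fun E => if lin (cv σ A v) E < 0 then 1 else 0) := by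
      simp only [z]
      rw [Ex_sub, Ex_one]
    rw [h2]
    linarith [Real.add_one_le_exp (-pi)]
  have hz0 : ∀ v E, 0 ≤ z v E := by
    intro v E; simp only [z]; split_ifs <;> norm_num
  have hz0' : ∀ v, 0 ≤ Ex w (z v) := by
    intro v
    have : Ex w (fun _ => 0) ≤ Ex w (z v) := Ex_mono h0 h1 (hz0 v)
    simpa [Ex] using this
  have hprod : ∀ B : Finset (Fin n), B ⊆ A → B.card = r →
      Ex w (fun E => ∏ v ∈ B, z v E) ≤ Real.exp (-(r * pi)) := by
    intro B hB hr
    rw [Ex_indep_prod w B (fun v e => Tn A v e) z]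
    · calc ∏ v ∈ B, Ex w (z v) ≤ ∏ v ∈ B, Real.exp (-pi) :=
            Finset.prod_le_prod (fun v _ => hz0' v) (fun v hv => hz v (hB hv))
        _ = Real.exp (-(r * pi)) := by
            rw [Finset.prod_const, hr, ← Real.exp_nat_mul]; ring_nf
    · intro i hi j hj e hTi hTj
      by_contra hij
      exact hTi.2 j (hB hj) (fun h => hij h.symm) hTj.1
    · intro i hi E E' hE
      simp only [z]
      rw [lin_congr σ A i E E' hE]
  have hp1 := hprod Ap subset_union_left hAp
  have hp2 := hprod Am subset_union_right hAm
  have hne : Ex w (fun E => (1:ℝ) - (∏ v ∈ Ap, z v E + ∏ v ∈ Am, z v E))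
      ≤ Ex w (fun E => ∑ p ∈ Ap ×ˢ Am, f p E) := by
    apply Ex_mono h0 h1
    intro E
    have hfn : ∀ p ∈ Ap ×ˢ Am, 0 ≤ f p E := by
      intro p _; simp only [f]; split_ifs <;> norm_num
    have hP1 : 0 ≤ ∏ v ∈ Ap, z v E := Finset.prod_nonneg fun v _ => hz0 v E
    have hP2 : 0 ≤ ∏ v ∈ Am, z v E := Finset.prod_nonneg fun v _ => hz0 v E
    have hP : ∀ B : Finset (Fin n), (¬ ∃ v ∈ B, lin (cv σ A v) E < 0) → ∏ v ∈ B, z v E = 1 := by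
      intro B hB
      apply Finset.prod_eq_one
      intro v hv
      have : ¬ lin (cv σ A v) E < 0 := fun h => hB ⟨v, hv, h⟩
      simp [z, this]
    by_cases ha : ∃ v ∈ Ap, lin (cv σ A v) E < 0
    · by_cases hb : ∃ v ∈ Am, lin (cv σ A v) E < 0
      · obtain ⟨i, hi, hi'⟩ := ha
        obtain ⟨j, hj, hj'⟩ := hb
        have hmem : (i, j) ∈ N E := by
          simp only [N, mem_filter, mem_product]
          exact ⟨⟨hi, hj⟩, hi', hj'⟩
        rcases hh : (N E).toList.head? with _ | q
        · rw [List.head?_eq_none_iff] at hh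
          have := Finset.mem_toList.2 hmem
          rw [hh] at this
          simp at this
        · have hq := hNmem E q hh
          have hq2 : q ∈ Ap ×ˢ Am := (Finset.mem_filter.1 hq).1
          have := Finset.single_le_sum hfn hq2
          have hfq : f q E = 1 := by simp [f, hh]
          rw [hfq] at this
          linarith
      · have := hP Am hb
        have := Finset.sum_nonneg hfn
        linarith
    · have := hP Ap ha
      have := Finset.sum_nonneg hfn
      linarith
  rw [Ex_sub, Ex_one, Ex_add] at hne
  linarith

lemma clean_bound {n k : ℕ} {w : KSet n k → ℝ} (h0 : ∀ e, 0 ≤ w e) (h1 : ∀ e, w e ≤ 1)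
    (A : Finset (Fin n)) (v : Fin n) :
    Ex w (fun E => if clean A v E then (0:ℝ) else 1) ≤
      ∑ e : KSet n k, w e * (if v ∈ e.1 ∧ ∃ j ∈ A, j ≠ v ∧ j ∈ e.1 then 1 else 0) := by
  rw [← Ex_lin]
  apply Ex_mono h0 h1
  intro E
  have hnn : ∀ e ∈ (univ : Finset (KSet n k)), (0:ℝ) ≤ if E e then
      (if v ∈ e.1 ∧ ∃ j ∈ A, j ≠ v ∧ j ∈ e.1 then 1 else 0) else 0 := by
    intro e _; split_ifs <;> norm_num
  by_cases hc : clean A v E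
  · rw [if_pos hc]
    exact Finset.sum_nonneg hnn
  · rw [if_neg hc]
    unfold clean at hc
    push Not at hc
    obtain ⟨e, he, hv, j, hj, hjv, hje⟩ := hc
    have := Finset.single_le_sum hnn (mem_univ e)
    rw [if_pos he, if_pos ⟨hv, j, hj, hjv, hje⟩] at this
    exact this

lemma good_fail {m k : ℕ} {σ : Fin (2 * m) → Bool} (hσ : balanced σ)
    {est : (KSet (2 * m) k → Bool) → (Fin (2 * m) → Bool)} (hest : isTruncMax est)
    (A : Finset (Fin (2 * m))) (i j : Fin (2 * m)) (hi : i ∈ A) (hj : j ∈ A) (hσi : σ i = true)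
    (hσj : σ j = false) (E : KSet (2 * m) k → Bool) (hli : lin (cv σ A i) E < 0)
    (hlj : lin (cv σ A j) E < 0) (hci : clean A i E) (hcj : clean A j E) :
    est E ≠ σ ∧ est E ≠ negB σ := by
  have hij : i ≠ j := by rintro rfl; rw [hσi] at hσj; cases hσj
  set x : Fin (2 * m) → Bool := fun v => if v = i ∨ v = j then !(σ v) else σ v with hx
  have hxb : balanced x := by
    have hm := bal_card hσ true
    have hs : univ.filter (fun v => x v = true)
        = insert j ((univ.filter (fun v => σ v = true)).erase i) := by
      ext v
      simp only [hx, mem_filter, mem_univ, true_and, mem_insert, mem_erase]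
      by_cases h1 : v = i
      · subst h1; simp [hσi, hij]
      · by_cases h2 : v = j
        · subst h2; simp [hσj]
        · simp [h1, h2]
    unfold balanced
    rw [hs, Finset.card_insert_of_notMem (by simp [hσj]), Finset.card_erase_of_mem (by simp [hσi]), hm]
    have : 0 < m := by
      rw [← hm]; exact Finset.card_pos.2 ⟨i, by simp [hσi]⟩
    omega
  have hlin : lin (fun e : KSet (2 * m) k => cE σ x e.1) E = lin (cv σ A i) E + lin (cv σ A j) E := by
    unfold lin
    rw [← Finset.sum_add_distrib]
    refine Finset.sum_congr rfl fun e _ => ?_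
    by_cases he : E e = true
    · simp only [he, if_true]
      by_cases hie : i ∈ e.1
      · have hTi : Tn A i e := ⟨hie, hci e he hie⟩
        have hje : j ∉ e.1 := hci e he hie j hj hij.symm
        have hTj : ¬ Tn A j e := fun h => hje h.1
        rw [cE_single σ x e.1 e.2 i hie (by simp [hx]) (by
          intro u hu hui
          have : u ≠ j := by rintro rfl; exact hje hu
          simp [hx, hui, this])]
        simp [cv, hTi, hTj, dk]
      · have hTi : ¬ Tn A i e := fun h => hie h.1
        by_cases hje : j ∈ e.1
        · have hTj : Tn A j e := ⟨hje, hcj e he hje⟩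
          rw [cE_single σ x e.1 e.2 j hje (by simp [hx]) (by
            intro u hu huj
            have : u ≠ i := by rintro rfl; exact hie hu
            simp [hx, huj, this])]
          simp [cv, hTi, hTj, dk]
        · have hTj : ¬ Tn A j e := fun h => hje h.1
          rw [cE_zero σ x e.1 (by
            intro u hu
            have h1 : u ≠ i := by rintro rfl; exact hie hu
            have h2 : u ≠ j := by rintro rfl; exact hje hu
            simp [hx, h1, h2])]
          simp [cv, hTi, hTj]
    · simp [he]
  have hd := obj_diff E σ x
  have hmax := (hest E).2 x hxb
  rw [hlin] at hd
  constructor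
  · intro h
    rw [h] at hmax
    linarith
  · intro h
    rw [h, obj_negB] at hmax
    linarith


lemma cv_exponent {k : ℕ} (hk : 2 ≤ k) {α β : ℝ} (hβ : 0 < β) (hαβ : β < α) (u : ℝ) {ε : ℝ}
    (hε : 0 < ε) (r : ℕ → ℕ)
    (hr : Tendsto (fun m : ℕ => (r m : ℝ) * (Real.log (2 * m) / (2 * m - 1))) atTop (nhds 0)) :
    ∀ᶠ m : ℕ in atTop, ∀ σ : Fin (2 * m) → Bool, balanced σ → ∀ A : Finset (Fin (2 * m)),
      A.card ≤ 2 * r m → ∀ v,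
      |∑ e : KSet (2 * m) k, ew k α β m σ e * (1 - Real.exp (-(u * cv σ A v e)))
        - Real.log (2 * m) * Ifun k α β u| ≤ ε * Real.log (2 * m) := by
  have hα : 0 < α := hβ.trans hαβ
  set g : ℕ → ℝ := fun a => 1 - Real.exp (-(u * dk k a)) with hg
  set K : ℝ := ∑ a ∈ range k, |g a| with hK
  have hK0 : 0 ≤ K := Finset.sum_nonneg fun a _ => abs_nonneg _
  have hgK : ∀ a < k, |g a| ≤ K := fun a ha =>
    Finset.single_le_sum (f := fun a => |g a|) (fun a _ => abs_nonneg _) (mem_range.2 ha)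
  have hJ := tendsto_Jn k α β g
  have hJ' : Tendsto (fun m => |Jn k α β m g - Ifun k α β u|) atTop (nhds 0) := by
    have := (hJ.sub_const (Ifun k α β u)).abs
    have h0 : ∑ a ∈ range k, lam k α β a * g a - Ifun k α β u = 0 := by
      simp [Ifun, hg]
    rwa [h0, abs_zero] at this
  have hJe := hJ'.eventually_le_const (show (0:ℝ) < ε / 2 by linarith)
  have hr2 : Tendsto (fun m : ℕ => K * (2 * (α * ((k:ℝ) - 1))) *
      ((r m : ℝ) * (Real.log (2 * m) / (2 * m - 1)))) atTop (nhds 0) := by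
    have := hr.const_mul (K * (2 * (α * ((k:ℝ) - 1))))
    rwa [mul_zero] at this
  have hre := hr2.eventually_le_const (show (0:ℝ) < ε / 2 by linarith)
  have hL := tendsto_log.eventually_ge_atTop 1
  filter_upwards [hJe, hre, hL, eventually_ge_atTop k] with m hJe hre hL hm σ hσ A hA v
  set L := Real.log (2 * m) with hLdef
  have hsplit : ∑ e : KSet (2 * m) k, ew k α β m σ e * (1 - Real.exp (-(u * cv σ A v e)))
      = L * Jn k α β m g - ∑ e : KSet (2 * m) k, ew k α β m σ e *
        (if v ∈ e.1 ∧ ∃ j ∈ A, j ≠ v ∧ j ∈ e.1 then g (oth σ v e.1) else 0) := by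
    rw [hLdef, ← sum_edgeP_oth α β hσ v g, ← Finset.sum_sub_distrib]
    refine Finset.sum_congr rfl fun e _ => ?_
    have hew : edgeP (pParam k α (2 * m)) (pParam k β (2 * m)) σ e.1 = ew k α β m σ e := rfl
    rw [hew, ← mul_sub]
    congr 1
    by_cases hv : v ∈ e.1
    · by_cases hj : ∃ j ∈ A, j ≠ v ∧ j ∈ e.1
      · have hT : ¬ Tn A v e := by
          rintro ⟨_, h⟩
          obtain ⟨j, hjA, hjv, hje⟩ := hj
          exact h j hjA hjv hje
        simp only [cv, hT, if_false, hv, if_true, hj, and_self]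
        simp
      · have hT : Tn A v e := ⟨hv, fun j hjA hjv hje => hj ⟨j, hjA, hjv, hje⟩⟩
        simp only [cv, hT, hv, if_true, hj, and_false, if_false, sub_zero, hg]
    · have hT : ¬ Tn A v e := fun h => hv h.1
      simp [cv, hT, hv]
  have herr : |∑ e : KSet (2 * m) k, ew k α β m σ e *
        (if v ∈ e.1 ∧ ∃ j ∈ A, j ≠ v ∧ j ∈ e.1 then g (oth σ v e.1) else 0)| ≤ ε / 2 := by
    refine (Finset.abs_sum_le_sum_abs _ _).trans ?_
    have h1 : ∀ e ∈ (univ : Finset (KSet (2 * m) k)), |ew k α β m σ e *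
        (if v ∈ e.1 ∧ ∃ j ∈ A, j ≠ v ∧ j ∈ e.1 then g (oth σ v e.1) else 0)|
        ≤ K * (ew k α β m σ e * (if v ∈ e.1 ∧ ∃ j ∈ A, j ≠ v ∧ j ∈ e.1 then 1 else 0)) := by
      intro e _
      have he := ew_nonneg hβ hαβ m σ e
      rw [abs_mul, abs_of_nonneg he]
      split_ifs with hc
      · have := hgK _ (oth_lt σ v e hc.1)
        nlinarith
      · simp
    refine (Finset.sum_le_sum h1).trans ?_
    rw [← Finset.mul_sum]
    have h2 := hit_le hk hβ hαβ hm σ v A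
    refine (mul_le_mul_of_nonneg_left h2 hK0).trans (le_trans ?_ hre)
    have hk1 : (2:ℝ) ≤ k := by exact_mod_cast hk
    have hm1 : (2:ℝ) ≤ m := by exact_mod_cast hk.trans hm
    have hA' : (A.card : ℝ) ≤ 2 * r m := by exact_mod_cast hA
    have hpos : 0 ≤ α * L * ((k:ℝ) - 1) / (2 * m - 1) := by
      apply div_nonneg
      · exact mul_nonneg (mul_nonneg hα.le (by linarith)) (by linarith)
      · linarith
    calc K * (A.card * (α * L * ((k:ℝ) - 1) / (2 * m - 1)))
        ≤ K * ((2 * r m) * (α * L * ((k:ℝ) - 1) / (2 * m - 1))) := by gcongr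
      _ = _ := by ring
  rw [hsplit]
  have h3 : |L * Jn k α β m g - L * Ifun k α β u| ≤ L * (ε / 2) := by
    rw [← mul_sub, abs_mul, abs_of_nonneg (by linarith : (0:ℝ) ≤ L)]
    gcongr
  rw [abs_le] at *
  constructor <;> nlinarith [h3.1, h3.2, herr.1, herr.2]

lemma cv_mgf {k : ℕ} (hk : 2 ≤ k) {α β : ℝ} (hβ : 0 < β) (hαβ : β < α) (u : ℝ) {ε : ℝ}
    (hε : 0 < ε) (r : ℕ → ℕ)
    (hr : Tendsto (fun m : ℕ => (r m : ℝ) * (Real.log (2 * m) / (2 * m - 1))) atTop (nhds 0)) :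
    ∀ᶠ m : ℕ in atTop, ∀ σ : Fin (2 * m) → Bool, balanced σ → ∀ A : Finset (Fin (2 * m)),
      A.card ≤ 2 * r m → ∀ v,
      Real.exp (-(Real.log (2 * m) * (Ifun k α β u + ε)))
        ≤ Ex (ew k α β m σ) (fun E => Real.exp (-(u * lin (cv σ A v) E))) ∧
      Ex (ew k α β m σ) (fun E => Real.exp (-(u * lin (cv σ A v) E)))
        ≤ Real.exp (-(Real.log (2 * m) * (Ifun k α β u - ε))) := by
  have hα : 0 < α := hβ.trans hαβ
  set g : ℕ → ℝ := fun a => 1 - Real.exp (-(u * dk k a)) with hg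
  set K : ℝ := ∑ a ∈ range k, |g a| with hK
  have hK0 : 0 ≤ K := Finset.sum_nonneg fun a _ => abs_nonneg _
  have hgK : ∀ a < k, |g a| ≤ K := fun a ha =>
    Finset.single_le_sum (f := fun a => |g a|) (fun a _ => abs_nonneg _) (mem_range.2 ha)
  have hJ := tendsto_Jn k α β (fun _ => (1:ℝ))
  set J := ∑ a ∈ range k, lam k α β a * (1:ℝ) with hJdef
  have hp := tendsto_p hk hα
  have hp1 := hp.eventually_le_const (show (0:ℝ) < 1 by norm_num)
  have hpK := (hp.mul_const K).eventually_le_const (show (0:ℝ) * K < 1 / 2 by norm_num)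
  have hpJ : ∀ᶠ m : ℕ in atTop, pParam k α (2 * m) * (2 * K ^ 2) *
      Jn k α β m (fun _ => (1:ℝ)) ≤ ε / 2 := by
    have := (hp.mul_const (2 * K ^ 2)).mul hJ
    exact this.eventually_le_const (by simp; linarith)
  filter_upwards [cv_exponent hk hβ hαβ u (half_pos hε) r hr, hp1, hpK, hpJ]
    with m hexp hp1 hpK hpJ σ hσ A hA v
  have hx := abs_le.1 (hexp σ hσ A hA v)
  set L := Real.log (2 * m) with hLdef
  have hL0 : 0 ≤ L := log_nonneg' m
  have h0 := ew_nonneg (k := k) hβ hαβ m σ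
  have hle := ew_le (k := k) hαβ m σ
  have h1 : ∀ e, ew k α β m σ e ≤ 1 := fun e => (hle e).trans hp1
  have hcK : ∀ e : KSet (2 * m) k, |1 - Real.exp (-(u * cv σ A v e))| ≤
      K * (if v ∈ e.1 then 1 else 0) := by
    intro e
    by_cases hT : Tn A v e
    · have hv := hT.1
      simp only [cv, hT, if_true, hv, mul_one]
      exact hgK _ (oth_lt σ v e hv)
    · simp only [cv, hT, if_false, mul_zero, neg_zero, Real.exp_zero, sub_self, abs_zero]
      split_ifs <;> simp [hK0]
  constructor
  · have hlow := le_Ex_exp (w := ew k α β m σ) (cv σ A v) u (by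
      intro e
      rw [abs_mul, abs_of_nonneg (h0 e)]
      have hb := hcK e
      have : K * (if v ∈ e.1 then (1:ℝ) else 0) ≤ K := by split_ifs <;> simp [hK0]
      calc _ ≤ pParam k α (2 * m) * K :=
            mul_le_mul (hle e) (hb.trans this) (abs_nonneg _) (p_nonneg hα m)
        _ ≤ _ := hpK)
    refine le_trans ?_ hlow
    apply Real.exp_le_exp.2
    have hsq : ∑ e : KSet (2 * m) k, 2 * (ew k α β m σ e * (1 - Real.exp (-(u * cv σ A v e)))) ^ 2
        ≤ L * (ε / 2) := by
      have hterm : ∀ e ∈ (univ : Finset (KSet (2 * m) k)),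
          2 * (ew k α β m σ e * (1 - Real.exp (-(u * cv σ A v e)))) ^ 2
          ≤ pParam k α (2 * m) * (2 * K ^ 2) * (ew k α β m σ e * (if v ∈ e.1 then 1 else 0)) := by
        intro e _
        have hb := hcK e
        have hb2 : (1 - Real.exp (-(u * cv σ A v e))) ^ 2 ≤ K ^ 2 * (if v ∈ e.1 then 1 else 0) := by
          rw [← sq_abs]
          refine (pow_le_pow_left₀ (abs_nonneg _) hb 2).trans ?_
          split_ifs <;> simp
        have hw2 : ew k α β m σ e ^ 2 ≤ pParam k α (2 * m) * ew k α β m σ e := by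
          rw [sq]; exact mul_le_mul_of_nonneg_right (hle e) (h0 e)
        rw [mul_pow]
        have := mul_le_mul hw2 hb2 (sq_nonneg _) (mul_nonneg (p_nonneg hα m) (h0 e))
        calc _ ≤ 2 * (pParam k α (2 * m) * ew k α β m σ e * (K ^ 2 * (if v ∈ e.1 then 1 else 0))) := by
              linarith
          _ = _ := by ring
      refine (Finset.sum_le_sum hterm).trans ?_
      rw [← Finset.mul_sum]
      have hs := sum_edgeP_oth (k := k) α β hσ v (fun _ => (1:ℝ))
      have hs' : ∑ e : KSet (2 * m) k, ew k α β m σ e * (if v ∈ e.1 then 1 else 0)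
          = L * Jn k α β m (fun _ => (1:ℝ)) := hs
      rw [hs']
      calc _ = L * (pParam k α (2 * m) * (2 * K ^ 2) * Jn k α β m (fun _ => (1:ℝ))) := by ring
        _ ≤ _ := mul_le_mul_of_nonneg_left hpJ hL0
    linarith [hx.2]
  · refine (Ex_exp_le h0 h1 (cv σ A v) u).trans ?_
    apply Real.exp_le_exp.2
    have : 0 ≤ ε * L := by positivity
    linarith [hx.1]

lemma exists_r {ε : ℝ} (hε : 0 < ε) : ∃ r : ℕ → ℕ,
    Tendsto (fun m : ℕ => (r m : ℝ) * (Real.log (2 * m) / (2 * m - 1))) atTop (nhds 0) ∧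
    ∀ m : ℕ, Real.exp ((1 - ε) * Real.log (2 * m)) ≤ r m := by
  refine ⟨fun m => ⌈Real.exp ((1 - ε) * Real.log (2 * m))⌉₊, ?_, fun m => Nat.le_ceil _⟩
  have h1 : Tendsto (fun x : ℝ => x * Real.exp (-(ε * x))) atTop (nhds 0) := by
    have h := Real.tendsto_pow_mul_exp_neg_atTop_nhds_zero 1
    have h2 := (h.comp (tendsto_id.const_mul_atTop hε)).const_mul ε⁻¹
    rw [mul_zero] at h2
    refine h2.congr fun x => ?_
    simp only [Function.comp, id, pow_one]
    field_simp
  have h2 := ((h1.comp tendsto_log).const_mul 2).add tendsto_log_div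
  rw [mul_zero, add_zero] at h2
  refine squeeze_zero' ?_ ?_ h2
  · filter_upwards [eventually_ge_atTop 1] with m hm
    have hm1 : (1:ℝ) ≤ m := by exact_mod_cast hm
    exact mul_nonneg (Nat.cast_nonneg _) (div_nonneg (log_nonneg' m) (by linarith))
  · filter_upwards [eventually_ge_atTop 1] with m hm
    have hm1 : (1:ℝ) ≤ m := by exact_mod_cast hm
    have hL0 := log_nonneg' m
    have hq : 0 ≤ Real.log (2 * m) / (2 * m - 1) := div_nonneg hL0 (by linarith)
    have hc := (Nat.ceil_lt_add_one (Real.exp_pos ((1 - ε) * Real.log (2 * m))).le).le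
    refine (mul_le_mul_of_nonneg_right hc hq).trans ?_
    rw [add_mul, one_mul]
    simp only [Function.comp]
    refine add_le_add ?_ le_rfl
    have he : Real.exp ((1 - ε) * Real.log (2 * m)) = (2 * m) * Real.exp (-(ε * Real.log (2 * m))) := by
      rw [show (1 - ε) * Real.log (2 * m) = Real.log (2 * m) + -(ε * Real.log (2 * m)) by ring,
        Real.exp_add, Real.exp_log (by linarith)]
    rw [he]
    have : (2 * m : ℝ) * (Real.log (2 * m) / (2 * m - 1)) ≤ 2 * Real.log (2 * m) := by
      rw [mul_div_assoc', div_le_iff₀ (by linarith)]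
      nlinarith
    calc _ = (2 * m : ℝ) * (Real.log (2 * m) / (2 * m - 1)) * Real.exp (-(ε * Real.log (2 * m))) := by
          ring
      _ ≤ 2 * Real.log (2 * m) * Real.exp (-(ε * Real.log (2 * m))) := by gcongr
      _ = _ := by ring

lemma fail_bound {k : ℕ} (hk : 2 ≤ k) {α β : ℝ} (hβ : 0 < β) (hαβ : β < α)
    (hI : I2def k α β < 1) :
    ∃ b : ℕ → ℝ, Tendsto b atTop (nhds 0) ∧ ∀ᶠ m : ℕ in atTop, ∀ σ : Fin (2 * m) → Bool,
      balanced σ → ∀ est : (KSet (2 * m) k → Bool) → (Fin (2 * m) → Bool), isTruncMax est →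
      1 - b m ≤ Ex (ew k α β m σ) (fun E => if est E ≠ σ ∧ est E ≠ negB σ then 1 else 0) := by
  have hα : 0 < α := hβ.trans hαβ
  obtain ⟨t, s, η, ε, ht, hs, hη, hε, hc1, hc2, hc3⟩ := choose_params k hk hβ hαβ hI
  obtain ⟨r, hr, hrl⟩ := exists_r (half_pos hε)
  set κ : ℕ → ℝ := fun m => 2 * (α * ((k:ℝ) - 1)) * ((r m : ℝ) * (Real.log (2 * m) / (2 * m - 1)))
    with hκ
  have hκt : Tendsto κ atTop (nhds 0) := by
    have := hr.const_mul (2 * (α * ((k:ℝ) - 1)))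
    rwa [mul_zero] at this
  set ρ : ℕ → ℝ := fun m => Real.exp (-(Real.exp (ε / 2 * Real.log (2 * m)))) with hρ
  have hρt : Tendsto ρ atTop (nhds 0) :=
    Real.tendsto_exp_neg_atTop_nhds_zero.comp
      (Real.tendsto_exp_atTop.comp (tendsto_log.const_mul_atTop (half_pos hε)))
  refine ⟨fun m => 1 - (1 - 2 * κ m) * (1 - 2 * ρ m), ?_, ?_⟩
  · have := (((hκt.const_mul 2).const_sub 1).mul ((hρt.const_mul 2).const_sub 1)).const_sub 1
    simpa using this
  · have hp1 := (tendsto_p hk hα).eventually_le_const (show (0:ℝ) < 1 by norm_num)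
    have hκ1 := hκt.eventually_le_const (show (0:ℝ) < 1 / 2 by norm_num)
    have hr1 := hr.eventually_le_const (show (0:ℝ) < 1 / 2 by norm_num)
    have hL1 := tendsto_log.eventually_ge_atTop 1
    have hLε := (tendsto_log.const_mul_atTop hε).eventually_ge_atTop 3
    filter_upwards [hp1, hκ1, hr1, hL1, hLε, eventually_ge_atTop k,
      cv_mgf hk hβ hαβ t hε r hr, cv_mgf hk hβ hαβ (t - s) hε r hr, cv_mgf hk hβ hαβ (t + s) hε r hr]
      with m hp1 hκ1 hr1 hL1 hLε hm hM1 hM2 hM3 σ hσ est hest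
    set L := Real.log (2 * m) with hL
    have hm1 : (2:ℝ) ≤ m := by exact_mod_cast hk.trans hm
    have h0 := ew_nonneg (k := k) hβ hαβ m σ
    have h1 : ∀ e, ew k α β m σ e ≤ 1 := fun e => (ew_le hαβ m σ e).trans hp1
    have hrm : r m ≤ m := by
      have : (r m : ℝ) ≤ m := by
        have h2 : (r m : ℝ) * (1 / (2 * m - 1)) ≤ 1 / 2 := by
          refine le_trans ?_ hr1
          have : (0:ℝ) < 2 * m - 1 := by linarith
          gcongr
        rw [mul_one_div, div_le_iff₀ (by linarith)] at h2
        linarith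
      exact_mod_cast this
    obtain ⟨Ap, hAps, hApc⟩ := Finset.exists_subset_card_eq
      (s := univ.filter (fun i => σ i = true)) (n := r m) (by rw [bal_card hσ true]; exact hrm)
    obtain ⟨Am, hAms, hAmc⟩ := Finset.exists_subset_card_eq
      (s := univ.filter (fun i => σ i = false)) (n := r m) (by rw [bal_card hσ false]; exact hrm)
    have hAc : (Ap ∪ Am).card ≤ 2 * r m := by
      have := Finset.card_union_le Ap Am
      omega
    have hpi : ∀ v ∈ Ap ∪ Am, Real.exp (-((1 - ε) * L)) ≤
        Ex (ew k α β m σ) (fun E => if lin (cv σ (Ap ∪ Am) v) E < 0 then 1 else 0) := by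
      intro v _
      refine le_trans ?_ (tail_lower h0 h1 (cv σ (Ap ∪ Am) v) (t := t) (s := s) (η := η * L) ht.le hs.le)
      have a1 := (hM1 σ hσ _ hAc v).1
      have a2 := (hM2 σ hσ _ hAc v).2
      have a3 := (hM3 σ hσ _ hAc v).2
      set I := Ifun k α β t with hIdef
      have b2 : Real.exp (-(L * (Ifun k α β (t - s) - ε))) ≤ Real.exp (-(L * (I + 2 * ε))) := by
        apply Real.exp_le_exp.2
        nlinarith
      have b3 : Real.exp (-(s * (η * L))) * Real.exp (-(L * (Ifun k α β (t + s) - ε)))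
          ≤ Real.exp (-(L * (I + 2 * ε))) := by
        rw [← Real.exp_add]
        apply Real.exp_le_exp.2
        nlinarith
      have b4 : Real.exp (-(s * (η * L))) * Ex (ew k α β m σ)
          (fun E => Real.exp (-((t + s) * lin (cv σ (Ap ∪ Am) v) E)))
          ≤ Real.exp (-(L * (I + 2 * ε))) :=
        (mul_le_mul_of_nonneg_left a3 (Real.exp_pos _).le).trans b3
      have b5 : 3 * Real.exp (-(L * (I + 2 * ε))) ≤ Real.exp (-(L * (I + ε))) := by
        have h3 : (3:ℝ) ≤ Real.exp (ε * L) := by linarith [Real.add_one_le_exp (ε * L)]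
        calc _ ≤ Real.exp (ε * L) * Real.exp (-(L * (I + 2 * ε))) := by gcongr
          _ = _ := by rw [← Real.exp_add]; congr 1; ring
      have b6 : Real.exp (-((1 - ε) * L)) ≤ Real.exp (-(t * (η * L))) * Real.exp (-(L * (I + 2 * ε))) := by
        rw [← Real.exp_add]
        apply Real.exp_le_exp.2
        nlinarith
      refine b6.trans (mul_le_mul_of_nonneg_left ?_ (Real.exp_pos _).le)
      linarith
    have hκ' : ∀ v ∈ Ap ∪ Am, Ex (ew k α β m σ)
        (fun E => if clean (Ap ∪ Am) v E then (0:ℝ) else 1) ≤ κ m := by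
      intro v _
      refine (clean_bound h0 h1 (Ap ∪ Am) v).trans ((hit_le hk hβ hαβ hm σ v (Ap ∪ Am)).trans ?_)
      have hA' : ((Ap ∪ Am).card : ℝ) ≤ 2 * r m := by exact_mod_cast hAc
      have hk1 : (2:ℝ) ≤ k := by exact_mod_cast hk
      have hpos : 0 ≤ α * L * ((k:ℝ) - 1) / (2 * m - 1) := by
        apply div_nonneg
        · exact mul_nonneg (mul_nonneg hα.le (by linarith)) (by linarith)
        · linarith
      calc _ ≤ (2 * r m) * (α * L * ((k:ℝ) - 1) / (2 * m - 1)) := by gcongr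
        _ = _ := by simp only [hκ]; ring
    have hgb := good_bound h0 h1 σ Ap Am (r m) hApc hAmc _ (κ m) (by linarith) hpi hκ'
    have hrho : Real.exp (-(r m * Real.exp (-((1 - ε) * L)))) ≤ ρ m := by
      simp only [hρ]
      apply Real.exp_le_exp.2
      have := mul_le_mul_of_nonneg_right (hrl m) (Real.exp_pos (-((1 - ε) * L))).le
      rw [← Real.exp_add] at this
      have e : (1 - ε / 2) * Real.log (2 * m) + -((1 - ε) * L) = ε / 2 * L := by rw [hL]; ring
      rw [e] at this
      linarith
    have hfin : Ex (ew k α β m σ) (fun E => if ∃ i ∈ Ap, ∃ j ∈ Am, lin (cv σ (Ap ∪ Am) i) E < 0 ∧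
        lin (cv σ (Ap ∪ Am) j) E < 0 ∧ clean (Ap ∪ Am) i E ∧ clean (Ap ∪ Am) j E then 1 else 0)
        ≤ Ex (ew k α β m σ) (fun E => if est E ≠ σ ∧ est E ≠ negB σ then 1 else 0) := by
      apply Ex_mono h0 h1
      intro E
      by_cases h : ∃ i ∈ Ap, ∃ j ∈ Am, lin (cv σ (Ap ∪ Am) i) E < 0 ∧
        lin (cv σ (Ap ∪ Am) j) E < 0 ∧ clean (Ap ∪ Am) i E ∧ clean (Ap ∪ Am) j E
      · obtain ⟨i, hi, j, hj, q1, q2, q3, q4⟩ := h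
        have hgf := good_fail hσ hest (Ap ∪ Am) i j (mem_union_left _ hi) (mem_union_right _ hj)
          (mem_filter.1 (hAps hi)).2 (mem_filter.1 (hAms hj)).2 E q1 q2 q3 q4
        rw [if_pos hgf]
        split_ifs <;> norm_num
      · rw [if_neg h]
        split_ifs <;> norm_num
    have hmul : (1 - 2 * κ m) * (1 - 2 * ρ m)
        ≤ (1 - 2 * κ m) * (1 - 2 * Real.exp (-(r m * Real.exp (-((1 - ε) * L))))) :=
      mul_le_mul_of_nonneg_left (by linarith) (by linarith)
    linarith


/-- If `I₂(α,β) < 1` then `σ̂_trunc` fails with probability `1 - o(1)`;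
if `I₂(α,β) > 1` then `σ̂_trunc ∈ {σ, -σ}` with probability `1 - o(1)`. -/
theorem trunc_threshold (k : ℕ) (hk : 2 ≤ k) (α β : ℝ) (hβ : 0 < β) (hαβ : β < α) :
    (I2def k α β < 1 →
      ∀ est : (m : ℕ) → (KSet (2 * m) k → Bool) → (Fin (2 * m) → Bool),
        (∀ m : ℕ, isTruncMax (est m)) →
        Tendsto (fun m : ℕ =>
            prEvent (2 * m) k (pParam k α (2 * m)) (pParam k β (2 * m))
              (fun σ E => est m E ≠ σ ∧ est m E ≠ negB σ))
          atTop (nhds 1)) ∧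
    (1 < I2def k α β →
      ∀ est : (m : ℕ) → (KSet (2 * m) k → Bool) → (Fin (2 * m) → Bool),
        (∀ m : ℕ, isTruncMax (est m)) →
        Tendsto (fun m : ℕ =>
            prEvent (2 * m) k (pParam k α (2 * m)) (pParam k β (2 * m))
              (fun σ E => est m E = σ ∨ est m E = negB σ))
          atTop (nhds 1)) := by
  constructor
  · intro hI est hest
    obtain ⟨b, hb, h⟩ := fail_bound hk hβ hαβ hI
    refine assemble hk hβ hαβ (fun m σ E => est m E ≠ σ ∧ est m E ≠ negB σ) b hb ?_
    filter_upwards [h] with m hm σ hσ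
    have h2 := hm σ hσ (est m) (hest m)
    convert h2
  · intro hI est hest
    obtain ⟨b, hb, h⟩ := success_bound hk hβ hαβ hI
    refine assemble hk hβ hαβ (fun m σ E => est m E = σ ∨ est m E = negB σ) b hb ?_
    filter_upwards [h] with m hm σ hσ
    have h2 := hm σ hσ (est m) (hest m)
    convert h2
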